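/- Suppose 0 ≤ V₀(x) ≤ C for all x and V₀(x) → C as |x| → ∞, with 0 < C < ∞. Then for each j ∈ ℕ, the j-th eigenvalue ω_j(k) of h₀(k) = p_x² + (Bx-k)² + V₀(x) satisfies lim_{|k|→∞} ω_j(k) = (2j+1)B + C. -/

import Mathlib

/-!
The proof rests on Sturm oscillation theory. For a confining potential `W`, Sturm comparison shows
that an eigenfunction of `-d²/dx² + W` with larger energy has strictly more zeros, and the supremum
of the energies at which no solution has more than `n + 1` zeros is an eigenvalue whose
eigenfunction has exactly `n` zeros. Hence the eigenfunction of `ω_j(k)` has exactly `j` zeros, and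
pointwise inequalities between potentials become inequalities between `j`-th eigenvalues.

Since `V₀ ≤ C`, comparison with the oscillator `(B x - k)² + C`, whose eigenfunctions are explicit,
gives `ω_j(k) ≤ (2 j + 1) B + C`. For `0 < θ < 1` and `|k|` large, the potential
`(θ B x - θ k)² + C - (1 - θ)` lies below `(B x - k)² + V₀ x` everywhere: where `V₀` is not yet
close to `C`, the point `x` is far from the centre `k / B` of the well and the loss
`(1 - θ²) (B x - k)²` in the quadratic term exceeds `C`. So `(2 j + 1) θ B + C - (1 - θ) ≤ ω_j(k)`,
and `θ → 1` closes the gap.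

Continuity of `V₀` is not assumed; it follows from the existence of `C²` eigenfunctions for every
`k`. An eigenfunction with `φ(x₀) ≠ 0` shows that `V₀` is continuous at `x₀`. If all of them
vanished at `x₀`, the numbers of zeros to the left and to the right of `x₀` would embed the
uncountably many parameters `k` into a countable set.
-/

open MeasureTheory Filter

/-- `ω` is an eigenvalue of the fibered operator `h₀(k) = p_x² + (Bx-k)² + V₀(x)`. -/
def IsEigenvalue (B : ℝ) (V₀ : ℝ → ℝ) (k ω : ℝ) : Prop :=
  ∃ φ : ℝ → ℝ, ContDiff ℝ 2 φ ∧ φ ≠ 0 ∧ Integrable (fun x => (φ x) ^ 2) ∧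
    ∀ x, -(deriv (deriv φ) x) + ((B * x - k) ^ 2 + V₀ x) * φ x = ω * φ x

open Set Topology
open scoped Pointwise

/-- `u` is a global solution of the Schrödinger-type equation `u'' = Q u`. -/
structure IsSolution (Q u : ℝ → ℝ) : Prop where
  differentiable : Differentiable ℝ u
  hasDerivAt_deriv : ∀ x, HasDerivAt (deriv u) (Q x * u x) x

/-- The phase-space trajectory `(u, u')` of `u`. -/
noncomputable def phase (u : ℝ → ℝ) (x : ℝ) : ℝ × ℝ :=
  (u x, deriv u x)

/-- `Q` is bounded on compact intervals; weaker than continuity, and enough for uniqueness of the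
solutions of `u'' = Q u`. -/
def IsLocallyBounded (Q : ℝ → ℝ) : Prop :=
  ∀ a b, ∃ K, ∀ x ∈ Icc a b, |Q x| ≤ K

/-- The function `u` and its derivative have no common zero. -/
def HasSimpleZeros (u : ℝ → ℝ) : Prop :=
  ∀ a, u a = 0 → deriv u a ≠ 0

theorem IsLocallyBounded.of_continuous {Q : ℝ → ℝ} (hQ : Continuous Q) : IsLocallyBounded Q :=
  fun _ _ => isCompact_Icc.exists_bound_of_continuousOn hQ.continuousOn

theorem IsLocallyBounded.add {Q R : ℝ → ℝ} (hQ : IsLocallyBounded Q) (hR : IsLocallyBounded R) :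
    IsLocallyBounded fun x => Q x + R x := fun a b =>
  let ⟨K, hK⟩ := hQ a b
  let ⟨L, hL⟩ := hR a b
  ⟨K + L, fun x hx => (abs_add_le _ _).trans (add_le_add (hK x hx) (hL x hx))⟩

theorem IsLocallyBounded.sub_const {Q : ℝ → ℝ} (hQ : IsLocallyBounded Q) (c : ℝ) :
    IsLocallyBounded fun x => Q x - c :=
  hQ.add (.of_continuous (continuous_const (y := -c)))

section Solutions

variable {Q u v u' : ℝ → ℝ}

theorem isSolution_of_hasDerivAt (hu : ∀ x, HasDerivAt u (u' x) x)
    (hu' : ∀ x, HasDerivAt u' (Q x * u x) x) : IsSolution Q u := by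
  have hderiv : deriv u = u' := deriv_eq hu
  exact ⟨fun x => (hu x).differentiableAt, hderiv ▸ hu'⟩

namespace IsSolution

theorem hasDerivAt (hu : IsSolution Q u) (x : ℝ) : HasDerivAt u (deriv u x) x :=
  (hu.differentiable x).hasDerivAt

theorem continuous (hu : IsSolution Q u) : Continuous u :=
  hu.differentiable.continuous

theorem continuous_deriv (hu : IsSolution Q u) : Continuous (deriv u) :=
  continuous_iff_continuousAt.2 fun x => (hu.hasDerivAt_deriv x).continuousAt

theorem const_mul (hu : IsSolution Q u) (c : ℝ) : IsSolution Q fun x => c * u x :=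
  isSolution_of_hasDerivAt (fun x => (hu.hasDerivAt x).const_mul c)
    fun x => ((hu.hasDerivAt_deriv x).const_mul c).congr_deriv (by ring)

theorem add (hu : IsSolution Q u) (hv : IsSolution Q v) : IsSolution Q fun x => u x + v x :=
  isSolution_of_hasDerivAt (fun x => (hu.hasDerivAt x).add (hv.hasDerivAt x))
    fun x => ((hu.hasDerivAt_deriv x).add (hv.hasDerivAt_deriv x)).congr_deriv (by ring)

theorem comp_mul_sub (hu : IsSolution Q u) (a d : ℝ) :
    IsSolution (fun x => a ^ 2 * Q (a * (x - d))) fun x => u (a * (x - d)) := by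
  have haffine : ∀ x, HasDerivAt (fun x => a * (x - d)) a x := fun x => by
    simpa using ((hasDerivAt_id x).sub_const d).const_mul a
  exact isSolution_of_hasDerivAt (u' := fun x => a * deriv u (a * (x - d)))
    (fun x => ((hu.hasDerivAt _).comp x (haffine x)).congr_deriv (mul_comm _ _)) fun x =>
    (((hu.hasDerivAt_deriv _).comp x (haffine x)).const_mul a).congr_deriv (by ring)

theorem comp_neg (hu : IsSolution Q u) : IsSolution (fun x => Q (-x)) fun x => u (-x) := by
  simpa using hu.comp_mul_sub (-1) 0

end IsSolution

theorem norm_swap_mul_le (q : ℝ) (y : ℝ × ℝ) : ‖(y.2, q * y.1)‖ ≤ max 1 |q| * ‖y‖ := by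
  refine max_le ?_ ?_
  · calc ‖y.2‖ ≤ 1 * ‖y‖ := by simpa using norm_snd_le y
      _ ≤ max 1 |q| * ‖y‖ := by gcongr; exact le_max_left _ _
  · calc ‖q * y.1‖ = |q| * ‖y.1‖ := norm_mul _ _
      _ ≤ max 1 |q| * ‖y‖ := by gcongr; exacts [le_max_right _ _, norm_fst_le y]

theorem lipschitzWith_swap_mul {q : ℝ} {K : NNReal} (hq : max 1 |q| ≤ K) :
    LipschitzWith K fun y : ℝ × ℝ => (y.2, q * y.1) :=
  LipschitzWith.of_dist_le_mul fun y z => by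
    have hsub : ((y.2, q * y.1) - (z.2, q * z.1) : ℝ × ℝ) = ((y - z).2, q * (y - z).1) := by
      ext <;> simp [mul_sub]
    rw [dist_eq_norm, dist_eq_norm, hsub]
    exact (norm_swap_mul_le q (y - z)).trans (by gcongr)

theorem IsSolution.hasDerivAt_phase (hu : IsSolution Q u) (x : ℝ) :
    HasDerivAt (phase u) (deriv u x, Q x * u x) x :=
  (hu.hasDerivAt x).prodMk (hu.hasDerivAt_deriv x)

theorem IsSolution.eq_zero (hQ : IsLocallyBounded Q) (hu : IsSolution Q u) {a : ℝ}
    (ha : u a = 0) (ha' : deriv u a = 0) : u = 0 := by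
  funext x
  obtain ⟨K, hK⟩ := hQ (min a x - 1) (max a x + 1)
  have hlip : ∀ t ∈ Ioo (min a x - 1) (max a x + 1),
      LipschitzOnWith (max 1 K.toNNReal) (fun y : ℝ × ℝ => (y.2, Q t * y.1)) univ := fun t ht =>
    (lipschitzWith_swap_mul (by
      push_cast
      exact max_le_max_left 1 ((hK t (Ioo_subset_Icc_self ht)).trans
        K.le_coe_toNNReal))).lipschitzOnWith
  have hmem : ∀ y ∈ Icc (min a x) (max a x), y ∈ Ioo (min a x - 1) (max a x + 1) := fun y hy =>
    ⟨by linarith [hy.1], by linarith [hy.2]⟩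
  have hphase := ODE_solution_unique_of_mem_Ioo (g := fun _ => (0 : ℝ × ℝ)) hlip
    (hmem a ⟨min_le_left _ _, le_max_left _ _⟩)
    (fun t _ => ⟨hu.hasDerivAt_phase t, mem_univ _⟩)
    (fun t _ => ⟨(hasDerivAt_const t 0).congr_deriv (by ext <;> simp), mem_univ _⟩)
    (by simp [phase, ha, ha'])
  exact congrArg Prod.fst (hphase (hmem x ⟨min_le_right _ _, le_max_right _ _⟩))

theorem IsSolution.hasSimpleZeros (hQ : IsLocallyBounded Q) (hu : IsSolution Q u) (h0 : u ≠ 0) :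
    HasSimpleZeros u :=
  fun _ ha ha' => h0 (hu.eq_zero hQ ha ha')

end Solutions

section Existence

section GlobalFlow

variable {E : Type*} [NormedAddCommGroup E] [NormedSpace ℝ E] [CompleteSpace E] {v : ℝ → E → E}

theorem exists_hasDerivAt_Ioo_of_lipschitzWith (hcont : ∀ y, Continuous fun t => v t y)
    (hv : ∀ a b, ∃ K : NNReal, ∀ t ∈ Icc a b, LipschitzWith K (v t) ∧ ∀ y, ‖v t y‖ ≤ K)
    (t₀ : ℝ) (y₀ : E) {R : ℝ} (hR : 0 < R) :
    ∃ y : ℝ → E, y t₀ = y₀ ∧ ∀ t ∈ Ioo (t₀ - R) (t₀ + R), HasDerivAt y (v t (y t)) t := by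
  obtain ⟨K, hK⟩ := hv (t₀ - R) (t₀ + R)
  lift R to NNReal using hR.le
  have hPL : IsPicardLindelof v (tmin := t₀ - R) (tmax := t₀ + R)
      ⟨t₀, by constructor <;> linarith⟩ y₀ (K * R) 0 K K :=
    ⟨fun t ht => (hK t ht).1.lipschitzOnWith, fun y _ => (hcont y).continuousOn,
      fun t ht y _ => (hK t ht).2 y, by simp⟩
  obtain ⟨y, hy₀, hy⟩ := hPL.exists_eq_forall_mem_Icc_hasDerivWithinAt₀
  exact ⟨y, hy₀, fun t ht => (hy t (Ioo_subset_Icc_self ht)).hasDerivAt (Icc_mem_nhds ht.1 ht.2)⟩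

theorem exists_forall_hasDerivAt_of_lipschitzWith
    (hcont : ∀ y, Continuous fun t => v t y)
    (hv : ∀ a b, ∃ K : NNReal, ∀ t ∈ Icc a b, LipschitzWith K (v t) ∧ ∀ y, ‖v t y‖ ≤ K)
    (t₀ : ℝ) (y₀ : E) : ∃ y : ℝ → E, y t₀ = y₀ ∧ ∀ t, HasDerivAt y (v t (y t)) t := by
  choose! Y hY₀ hY using fun R (hR : 0 < R) =>
    exists_hasDerivAt_Ioo_of_lipschitzWith hcont hv t₀ y₀ hR
  have hsub : ∀ {R S : ℝ}, R ≤ S → Ioo (t₀ - R) (t₀ + R) ⊆ Ioo (t₀ - S) (t₀ + S) := fun h =>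
    Ioo_subset_Ioo (by linarith) (by linarith)
  have hagree : ∀ R S, 0 < R → R ≤ S → EqOn (Y R) (Y S) (Ioo (t₀ - R) (t₀ + R)) := by
    intro R S hR hRS
    obtain ⟨K, hK⟩ := hv (t₀ - R) (t₀ + R)
    exact ODE_solution_unique_of_mem_Ioo (s := fun _ => univ) (t₀ := t₀)
      (fun t ht => (hK t (Ioo_subset_Icc_self ht)).1.lipschitzOnWith)
      ⟨by linarith, by linarith⟩ (fun t ht => ⟨hY R hR t ht, mem_univ _⟩)
      (fun t ht => ⟨hY S (hR.trans_le hRS) t (hsub hRS ht), mem_univ _⟩)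
      (by rw [hY₀ R hR, hY₀ S (hR.trans_le hRS)])
  have hpos : ∀ t, 0 < |t - t₀| + 1 := fun t => by positivity
  have hmem : ∀ t, t ∈ Ioo (t₀ - (|t - t₀| + 1)) (t₀ + (|t - t₀| + 1)) := fun t =>
    ⟨by linarith [neg_abs_le (t - t₀)], by linarith [le_abs_self (t - t₀)]⟩
  refine ⟨fun t => Y (|t - t₀| + 1) t, hY₀ _ (hpos _), fun t => ?_⟩
  refine (hY _ (hpos t) t (hmem t)).congr_of_eventuallyEq ?_
  filter_upwards [isOpen_Ioo.mem_nhds (hmem t)] with s hs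
  rcases le_total (|s - t₀| + 1) (|t - t₀| + 1) with h | h
  · exact hagree _ _ (hpos s) h (hmem s)
  · exact (hagree _ _ (hpos t) h hs).symm

end GlobalFlow

/-- The right-hand side of the Prüfer equation `θ' = 1 - (1 + Q) sin² θ`, obtained from `u'' = Q u`
by writing `u = r sin θ` and `u' = r cos θ`. -/
noncomputable def prueferField (Q : ℝ → ℝ) (t θ : ℝ) : ℝ :=
  1 - (1 + Q t) * Real.sin θ ^ 2

variable {Q : ℝ → ℝ}

theorem hasDerivAt_prueferField (t θ : ℝ) :
    HasDerivAt (prueferField Q t) (-((1 + Q t) * Real.sin (2 * θ))) θ :=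
  ((((Real.hasDerivAt_sin θ).pow 2).const_mul (1 + Q t)).const_sub 1).congr_deriv (by
    rw [Real.sin_two_mul]
    simp)

theorem lipschitzWith_prueferField {t : ℝ} {K : NNReal} (hK : |1 + Q t| ≤ K) :
    LipschitzWith K (prueferField Q t) := by
  refine lipschitzWith_of_nnnorm_deriv_le
    (fun θ => (hasDerivAt_prueferField t θ).differentiableAt) fun θ => ?_
  rw [(hasDerivAt_prueferField t θ).deriv, ← NNReal.coe_le_coe, coe_nnnorm, Real.norm_eq_abs,
    abs_neg, abs_mul]
  exact (mul_le_of_le_one_right (abs_nonneg _) (Real.abs_sin_le_one _)).trans hK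

theorem abs_prueferField_le (t θ : ℝ) : |prueferField Q t θ| ≤ 1 + |1 + Q t| := by
  refine (abs_sub _ _).trans ?_
  rw [abs_one, abs_mul, abs_of_nonneg (sq_nonneg (Real.sin θ))]
  gcongr
  exact mul_le_of_le_one_right (abs_nonneg _) (Real.sin_sq_le_one θ)

theorem exists_pruefer_angle (hQ : Continuous Q) (t₀ θ₀ : ℝ) :
    ∃ θ : ℝ → ℝ, θ t₀ = θ₀ ∧ ∀ t, HasDerivAt θ (prueferField Q t (θ t)) t := by
  refine exists_forall_hasDerivAt_of_lipschitzWith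
    (fun y => by unfold prueferField; fun_prop) (fun a b => ?_) t₀ θ₀
  obtain ⟨K, hK⟩ := isCompact_Icc.exists_bound_of_continuousOn (s := Icc a b)
    (f := fun t => 1 + Q t) (by fun_prop)
  refine ⟨1 + K.toNNReal, fun t ht => ?_⟩
  have hKt : |1 + Q t| ≤ K.toNNReal := (hK t ht).trans K.le_coe_toNNReal
  refine ⟨lipschitzWith_prueferField (hKt.trans ?_), fun y => (abs_prueferField_le t y).trans ?_⟩
  · exact NNReal.coe_le_coe.2 le_add_self
  · push_cast
    gcongr

theorem exists_isSolution_sin_cos (hQ : Continuous Q) (t₀ θ₀ : ℝ) :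
    ∃ u, IsSolution Q u ∧ u t₀ = Real.sin θ₀ ∧ deriv u t₀ = Real.cos θ₀ := by
  obtain ⟨θ, hθ₀, hθ⟩ := exists_pruefer_angle hQ t₀ θ₀
  have hθc : Continuous θ := continuous_iff_continuousAt.2 fun t => (hθ t).continuousAt
  set g : ℝ → ℝ := fun t => (1 + Q t) * Real.sin (θ t) * Real.cos (θ t) with hg
  have hgc : Continuous g := by fun_prop
  set r : ℝ → ℝ := fun t => Real.exp (∫ s in t₀..t, g s) with hr
  have hr' : ∀ t, HasDerivAt r (r t * g t) t := fun t =>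
    (intervalIntegral.integral_hasDerivAt_right (hgc.intervalIntegrable _ _)
      (hgc.stronglyMeasurableAtFilter _ _) hgc.continuousAt).exp
  have hu : ∀ t, HasDerivAt (fun s => r s * Real.sin (θ s)) (r t * Real.cos (θ t)) t := fun t =>
    ((hr' t).mul (hθ t).sin).congr_deriv (by simp only [hg, prueferField]; ring)
  have hu' : ∀ t, HasDerivAt (fun s => r s * Real.cos (θ s)) (Q t * (r t * Real.sin (θ t))) t :=
    fun t => ((hr' t).mul (hθ t).cos).congr_deriv (by
      simp only [hg, prueferField]
      linear_combination r t * Real.sin (θ t) * (1 + Q t) * Real.sin_sq_add_cos_sq (θ t))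
  refine ⟨_, isSolution_of_hasDerivAt hu hu', ?_, ?_⟩
  · simp [hr, hθ₀]
  · rw [(hu t₀).deriv]
    simp [hr, hθ₀]

theorem exists_isSolution (hQ : Continuous Q) (t₀ a b : ℝ) :
    ∃ u, IsSolution Q u ∧ u t₀ = a ∧ deriv u t₀ = b := by
  obtain ⟨u, hu, hu₀, hu₀'⟩ := exists_isSolution_sin_cos hQ t₀ (Real.pi / 2)
  obtain ⟨v, hv, hv₀, hv₀'⟩ := exists_isSolution_sin_cos hQ t₀ 0
  refine ⟨_, (hu.const_mul a).add (hv.const_mul b), ?_, ?_⟩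
  · simp [hu₀, hv₀]
  · have hderiv := ((hu.hasDerivAt t₀).const_mul a).add ((hv.hasDerivAt t₀).const_mul b)
    exact hderiv.deriv.trans (by simp [hu₀', hv₀'])

end Existence

section ContinuousDependence

theorem gronwallBound_self_le {ε K x : ℝ} (hε : 0 ≤ ε) (hK : 1 ≤ K) (hx : 0 ≤ x) :
    gronwallBound ε K ε x ≤ 2 * ε * Real.exp (K * x) := by
  rw [gronwallBound_of_K_ne_0 (by positivity)]
  have hexp : 1 ≤ Real.exp (K * x) := Real.one_le_exp (by positivity)
  have hdiv : ε / K * (Real.exp (K * x) - 1) ≤ ε * Real.exp (K * x) :=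
    mul_le_mul (div_le_self hε hK) (by linarith) (by linarith) hε
  linarith

variable {Q q u v : ℝ → ℝ} {R : ℝ}

theorem norm_phase_sub_le (hu : IsSolution Q u) (hv : IsSolution q v) {K η : ℝ} (hK : 1 ≤ K)
    (hη : 0 ≤ η) (hq : ∀ x ∈ Icc 0 R, |q x| ≤ K) (hQq : ∀ x ∈ Icc 0 R, |(Q x - q x) * u x| ≤ η)
    (h0 : ‖phase u 0 - phase v 0‖ ≤ η) :
    ∀ x ∈ Icc 0 R, ‖phase u x - phase v x‖ ≤ 2 * η * Real.exp (K * x) := by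
  intro x hx
  have hderiv : ∀ x, HasDerivAt (fun x => phase u x - phase v x)
      ((deriv u x, Q x * u x) - (deriv v x, q x * v x)) x := fun x =>
    (hu.hasDerivAt_phase x).sub (hv.hasDerivAt_phase x)
  refine (norm_le_gronwallBound_of_norm_deriv_right_le (δ := η) (K := K) (ε := η)
    (fun x _ => (hderiv x).continuousAt.continuousWithinAt)
    (fun x _ => (hderiv x).hasDerivWithinAt) h0 (fun x hx => ?_) x hx).trans ?_
  · have hx' := Ico_subset_Icc_self hx
    have hsplit : ((deriv u x, Q x * u x) - (deriv v x, q x * v x) : ℝ × ℝ)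
        = ((phase u x - phase v x).2, q x * (phase u x - phase v x).1)
          + (0, (Q x - q x) * u x) := by
      ext
      · simp [phase]
      · simp only [phase, Prod.snd_sub, Prod.snd_add, Prod.fst_sub]
        ring
    rw [hsplit]
    refine (norm_add_le _ _).trans (add_le_add ((norm_swap_mul_le _ _).trans ?_) ?_)
    · gcongr
      exact max_le hK (hq x hx')
    · simpa [Prod.norm_def, hη] using hQq x hx'
  · simpa using gronwallBound_self_le hη hK hx.1

variable {ι : Type*} {l : Filter ι} {Qs us : ι → ℝ → ℝ}

theorem tendstoUniformlyOn_phase_Icc_zero (hQ : IsLocallyBounded Q)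
    (hQs : TendstoUniformlyOn Qs Q l (Icc 0 R)) (hu : IsSolution Q u)
    (hus : ∀ i, IsSolution (Qs i) (us i))
    (h0 : Tendsto (fun i => phase (us i) 0) l (𝓝 (phase u 0))) :
    TendstoUniformlyOn (fun i => phase (us i)) (phase u) l (Icc 0 R) := by
  obtain ⟨K, hK⟩ := hQ 0 R
  obtain ⟨M, hM⟩ := IsLocallyBounded.of_continuous hu.continuous 0 R
  rcases lt_or_ge R 0 with hR | hR
  · simp [Icc_eq_empty hR.not_ge, tendstoUniformlyOn_empty]
  have hK0 : 0 ≤ K := (abs_nonneg _).trans (hK 0 ⟨le_rfl, hR⟩)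
  have hM0 : 0 ≤ M := (abs_nonneg _).trans (hM 0 ⟨le_rfl, hR⟩)
  rw [Metric.tendstoUniformlyOn_iff] at hQs ⊢
  intro ε hε
  set η : ℝ := ε / (4 * Real.exp ((K + 1) * R)) with hη
  have hηpos : 0 < η := by positivity
  filter_upwards [Metric.tendsto_nhds.1 h0 η hηpos, hQs 1 one_pos,
    hQs (η / (M + 1)) (by positivity)] with i hi0 hi1 hiη x hx
  have hle := norm_phase_sub_le hu (hus i) (K := K + 1) (by linarith) hηpos.le
    (fun y hy => ?_) (fun y hy => ?_) (by rw [← dist_eq_norm, dist_comm]; exact hi0.le) x hx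
  · rw [dist_eq_norm]
    calc ‖phase u x - phase (us i) x‖ ≤ 2 * η * Real.exp ((K + 1) * x) := hle
      _ ≤ 2 * η * Real.exp ((K + 1) * R) := by gcongr; exact hx.2
      _ = ε / 2 := by rw [hη]; field_simp; ring
      _ < ε := half_lt_self hε
  · have hdist := (Real.dist_eq _ _ ▸ hi1 y hy).le
    rw [abs_sub_comm] at hdist
    linarith [abs_sub_abs_le_abs_sub (Qs i y) (Q y), hK y hy]
  · calc |(Q y - Qs i y) * u y| = dist (Q y) (Qs i y) * |u y| := by rw [abs_mul, Real.dist_eq]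
      _ ≤ η / (M + 1) * (M + 1) := by gcongr; exacts [(hiη y hy).le, (hM y hy).trans (by linarith)]
      _ = η := by field_simp

theorem phase_comp_neg (u : ℝ → ℝ) (x : ℝ) :
    phase (fun y => u (-y)) x = ((phase u (-x)).1, -(phase u (-x)).2) := by
  simp [phase, deriv_comp_neg]

theorem IsLocallyBounded.comp_neg (hQ : IsLocallyBounded Q) :
    IsLocallyBounded fun x => Q (-x) := fun a b =>
  (hQ (-b) (-a)).imp fun _ hK x hx => hK (-x) ⟨neg_le_neg hx.2, neg_le_neg hx.1⟩

theorem tendstoLocallyUniformly_phase (hQ : IsLocallyBounded Q)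
    (hQs : TendstoLocallyUniformly Qs Q l) (hu : IsSolution Q u)
    (hus : ∀ i, IsSolution (Qs i) (us i))
    (h0 : Tendsto (fun i => phase (us i) 0) l (𝓝 (phase u 0))) :
    TendstoLocallyUniformly (fun i => phase (us i)) (phase u) l := by
  rw [tendstoLocallyUniformly_iff_forall_isCompact] at hQs ⊢
  intro s hs
  obtain ⟨R, hR⟩ := hs.isBounded.subset_closedBall 0
  have hright := tendstoUniformlyOn_phase_Icc_zero hQ (hQs _ (isCompact_Icc (a := 0) (b := R)))
    hu hus h0
  have hflip : Continuous fun y : ℝ × ℝ => (y.1, -y.2) := by fun_prop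
  have hleft := tendstoUniformlyOn_phase_Icc_zero (R := R) hQ.comp_neg
    (((hQs _ (isCompact_Icc (a := -R) (b := 0))).comp Neg.neg).mono fun x hx =>
      ⟨neg_le_neg hx.2, neg_nonpos.2 hx.1⟩)
    hu.comp_neg (fun i => (hus i).comp_neg)
    (by simpa only [phase_comp_neg, neg_zero, Function.comp_def] using (hflip.tendsto _).comp h0)
  rw [Metric.tendstoUniformlyOn_iff] at hright hleft ⊢
  intro ε hε
  filter_upwards [hright ε hε, hleft ε hε] with i hi_right hi_left x hx
  have hxR := abs_le.1 (mem_closedBall_zero_iff.1 (hR hx))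
  rcases le_total 0 x with h | h
  · exact hi_right x ⟨h, hxR.2⟩
  · have := hi_left (-x) ⟨by linarith, by linarith [hxR.1]⟩
    simp only [phase_comp_neg, neg_neg, Prod.dist_eq, dist_neg_neg] at this ⊢
    exact this

theorem tendstoLocallyUniformly_sub_const (W : ℝ → ℝ) {es : ι → ℝ} {e : ℝ}
    (hes : Tendsto es l (𝓝 e)) :
    TendstoLocallyUniformly (fun i x => W x - es i) (fun x => W x - e) l := by
  refine TendstoUniformly.tendstoLocallyUniformly (Metric.tendstoUniformly_iff.2 fun ε hε => ?_)
  filter_upwards [Metric.tendsto_nhds.1 hes ε hε] with i hi x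
  rwa [dist_sub_left, dist_comm]

end ContinuousDependence

/-- The zeros of `u`, as a set whose `encard` counts them. -/
def zeroSet (u : ℝ → ℝ) : Set ℝ :=
  {x | u x = 0}

section ZeroCounting

theorem tendsto_prod_nhds_of_tendstoLocallyUniformly {ι α β : Type*} [TopologicalSpace α]
    [UniformSpace β] {l : Filter ι} {F : ι → α → β} {f : α → β} {x : α}
    (h : TendstoLocallyUniformly F f l) (hf : ContinuousAt f x) :
    Tendsto (fun p : ι × α => F p.1 p.2) (l ×ˢ 𝓝 x) (𝓝 (f x)) :=
  have h_fst : TendstoLocallyUniformly (fun p : ι × α => F p.1) f (l ×ˢ 𝓝 x) := fun s hs y =>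
    let ⟨t, ht, hst⟩ := h s hs y
    ⟨t, ht, tendsto_fst.eventually hst⟩
  h_fst.tendsto_comp hf tendsto_snd

theorem exists_mem_uIcc_eq_zero_of_mul_nonpos {f : ℝ → ℝ} {a b : ℝ}
    (hf : ContinuousOn f (uIcc a b)) (h : f a * f b ≤ 0) : ∃ x ∈ uIcc a b, f x = 0 :=
  intermediate_value_uIcc hf <| mem_uIcc.2 <| by
    rcases mul_nonpos_iff.1 h with ⟨ha, hb⟩ | ⟨ha, hb⟩
    exacts [Or.inr ⟨hb, ha⟩, Or.inl ⟨ha, hb⟩]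

theorem exists_mul_neg_of_deriv_ne_zero {f : ℝ → ℝ} {a : ℝ} (ha : f a = 0) (ha' : deriv f a ≠ 0)
    {s : Set ℝ} (hs : s ∈ 𝓝 a) : ∃ x y, uIcc x y ⊆ s ∧ f x * f y < 0 := by
  have hpos : 0 < deriv (fun x => deriv f a * f x) a := by
    rw [deriv_const_mul_field]
    exact mul_self_pos.2 ha'
  have hsign := eventually_nhdsWithin_sign_eq_of_deriv_pos hpos (by simp [ha])
  obtain ⟨δ, hδ, hball⟩ := Metric.nhds_basis_closedBall.mem_iff.1 (inter_mem hs hsign)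
  rw [Real.closedBall_eq_Icc] at hball
  have hle : a - δ ≤ a + δ := by linarith
  refine ⟨a - δ, a + δ, (uIcc_of_le hle).subset.trans (hball.trans inter_subset_left), ?_⟩
  have hleft : deriv f a * f (a - δ) < 0 := by
    rw [← sign_eq_neg_one_iff, (hball (left_mem_Icc.2 hle)).2, sign_eq_neg_one_iff]
    linarith
  have hright : 0 < deriv f a * f (a + δ) := by
    rw [← sign_eq_one_iff, (hball (right_mem_Icc.2 hle)).2, sign_eq_one_iff]
    linarith
  have hmul := mul_neg_of_neg_of_pos hleft hright
  rw [mul_mul_mul_comm] at hmul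
  exact neg_of_mul_neg_right hmul (mul_self_nonneg _)

variable {ι : Type*} {l : Filter ι} {us : ι → ℝ → ℝ} {u : ℝ → ℝ}

theorem eventually_exists_mem_eq_zero {a : ℝ} (ha : u a = 0) (ha' : deriv u a ≠ 0)
    (hus : ∀ i, Continuous (us i)) (hlim : ∀ x, Tendsto (us · x) l (𝓝 (u x)))
    {s : Set ℝ} (hs : s ∈ 𝓝 a) : ∀ᶠ i in l, ∃ x ∈ s, us i x = 0 := by
  obtain ⟨x, y, hxy, hneg⟩ := exists_mul_neg_of_deriv_ne_zero ha ha' hs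
  filter_upwards [((hlim x).mul (hlim y)).eventually_lt_const hneg] with i hi
  obtain ⟨z, hz, hz0⟩ := exists_mem_uIcc_eq_zero_of_mul_nonpos (hus i).continuousOn hi.le
  exact ⟨z, hxy hz, hz0⟩

theorem eventually_le_encard_zeroSet_inter (hsimple : HasSimpleZeros u)
    (hus : ∀ i, Continuous (us i)) (hlim : ∀ x, Tendsto (us · x) l (𝓝 (u x))) {U : Set ℝ}
    (hU : IsOpen U) {n : ℕ} (hn : n ≤ (zeroSet u ∩ U).encard) :
    ∀ᶠ i in l, n ≤ (zeroSet (us i) ∩ U).encard := by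
  obtain ⟨t, ht, htn⟩ := exists_subset_encard_eq hn
  have htfin : t.Finite := finite_of_encard_eq_coe htn
  obtain ⟨V, hV, hdisj⟩ := htfin.t2_separation
  have hzero : ∀ a ∈ t, ∀ᶠ i in l, ∃ x ∈ V a ∩ U, us i x = 0 := fun a ha =>
    eventually_exists_mem_eq_zero (ht ha).1 (hsimple a (ht ha).1) hus hlim
      (((hV a).2.inter hU).mem_nhds ⟨(hV a).1, (ht ha).2⟩)
  filter_upwards [(eventually_all_finite htfin).2 hzero] with i hi
  choose! z hz hz0 using hi
  rw [← htn]
  refine encard_le_encard_of_injOn (f := z) (fun a ha => ⟨hz0 a ha, (hz a ha).2⟩)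
    fun a ha b hb hab => ?_
  by_contra hne
  exact disjoint_left.1 (hdisj ha hb hne) (hz a ha).1 (hab ▸ (hz b hb).1)

variable (hsimple : HasSimpleZeros u) (hu : Continuous (phase u))
  (hus : ∀ i, Differentiable ℝ (us i))
  (hlim : TendstoLocallyUniformly (fun i => phase (us i)) (phase u) l)

include hsimple hu hus hlim

theorem exists_nhds_eventually_zeros_subsingleton (x : ℝ) :
    ∃ N ∈ 𝓝 x, ∀ᶠ i in l, ∀ y ∈ N, us i y = 0 →
      u x = 0 ∧ ∀ z ∈ N, us i z = 0 → z = y := by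
  have hjoint := tendsto_prod_nhds_of_tendstoLocallyUniformly hlim (hu.continuousAt (x := x))
  by_cases hx : u x = 0
  · have hderiv := hjoint.snd_nhds.eventually_ne (hsimple x hx)
    obtain ⟨p, hp, q, hq, hpq⟩ := eventually_prod_iff.1 hderiv
    obtain ⟨δ, hδ, hball⟩ := Metric.mem_nhds_iff.1 hq
    have hrolle : ∀ i, p i → ∀ y ∈ Metric.ball x δ, ∀ z ∈ Metric.ball x δ,
        us i y = 0 → us i z = 0 → ¬ y < z := by
      intro i hi y hy z hz hy0 hz0 hyz
      obtain ⟨c, hc, hc0⟩ := exists_deriv_eq_zero hyz (hus i).continuous.continuousOn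
        (hy0.trans hz0.symm)
      have hcball := (convex_ball x δ).ordConnected.out hy hz (Ioo_subset_Icc_self hc)
      exact hpq hi (hball hcball) hc0
    refine ⟨_, Metric.ball_mem_nhds x hδ, hp.mono fun i hi y hy hy0 => ⟨hx, fun z hz hz0 => ?_⟩⟩
    exact le_antisymm (not_lt.1 (hrolle i hi y hy z hz hy0 hz0))
      (not_lt.1 (hrolle i hi z hz y hy hz0 hy0))
  · obtain ⟨p, hp, q, hq, hpq⟩ := eventually_prod_iff.1 (hjoint.fst_nhds.eventually_ne hx)
    exact ⟨_, hq, hp.mono fun i hi y hy hy0 => absurd hy0 (hpq hi hy)⟩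

theorem eventually_encard_zeroSet_inter_le {K : Set ℝ} (hK : IsCompact K) :
    ∀ᶠ i in l, (zeroSet (us i) ∩ K).encard ≤ (zeroSet u ∩ K).encard := by
  choose N hN hzeros using exists_nhds_eventually_zeros_subsingleton hsimple hu hus hlim
  obtain ⟨t, htK, ht⟩ := hK.elim_nhds_subcover N fun x _ => hN x
  filter_upwards [t.eventually_all.2 fun x _ => hzeros x] with i hi
  have hcentre : ∀ y ∈ zeroSet (us i) ∩ K, ∃ x ∈ t, y ∈ N x := fun y hy => by
    simpa using ht hy.2
  choose! c hct hcN using hcentre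
  refine encard_le_encard_of_injOn (f := c)
    (fun y hy => ⟨(hi _ (hct y hy) y (hcN y hy) hy.1).1, htK _ (hct y hy)⟩) fun y hy z hz hyz => ?_
  exact (hi _ (hct z hz) z (hcN z hz) hz.1).2 y (hyz ▸ hcN y hy) hy.1

end ZeroCounting

section Sturm

/-- The Wronskian `φ ψ' - φ' ψ` of `φ` and `ψ`. -/
noncomputable def wronskian (φ ψ : ℝ → ℝ) (x : ℝ) : ℝ :=
  φ x * deriv ψ x - deriv φ x * ψ x

theorem mul_pos_of_forall_ne_zero {f : ℝ → ℝ} {J : Set ℝ} (hJ : J.OrdConnected)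
    (hf : ContinuousOn f J) (hne : ∀ x ∈ J, f x ≠ 0) {x y : ℝ} (hx : x ∈ J) (hy : y ∈ J) :
    0 < f x * f y := by
  by_contra! h
  obtain ⟨z, hz, hz0⟩ := exists_mem_uIcc_eq_zero_of_mul_nonpos
    (hf.mono (hJ.uIcc_subset hx hy)) h
  exact hne z (hJ.uIcc_subset hx hy hz) hz0

theorem wronskian_comp_neg (φ ψ : ℝ → ℝ) (x : ℝ) :
    wronskian (fun y => φ (-y)) (fun y => ψ (-y)) x = -wronskian φ ψ (-x) := by
  simp only [wronskian, deriv_comp_neg]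
  ring

variable {Q q φ ψ : ℝ → ℝ}

theorem IsSolution.hasDerivAt_wronskian (hφ : IsSolution Q φ) (hψ : IsSolution q ψ) (x : ℝ) :
    HasDerivAt (wronskian φ ψ) ((q x - Q x) * (φ x * ψ x)) x :=
  (((hφ.hasDerivAt x).mul (hψ.hasDerivAt_deriv x)).sub
    ((hφ.hasDerivAt_deriv x).mul (hψ.hasDerivAt x))).congr_deriv (by ring)

theorem IsSolution.strictAntiOn_wronskian (hφ : IsSolution Q φ) (hψ : IsSolution q ψ)
    {D : Set ℝ} (hD : Convex ℝ D) (hqQ : ∀ x ∈ interior D, q x < Q x)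
    (hpos : ∀ x ∈ interior D, 0 < φ x * ψ x) : StrictAntiOn (wronskian φ ψ) D :=
  strictAntiOn_of_deriv_neg hD
    (fun x _ => (hφ.hasDerivAt_wronskian hψ x).continuousAt.continuousWithinAt) fun x hx => by
      rw [(hφ.hasDerivAt_wronskian hψ x).deriv]
      exact mul_neg_of_neg_of_pos (sub_neg.2 (hqQ x hx)) (hpos x hx)

theorem wronskian_nonneg_of_pos_left {a b : ℝ} (hab : a < b) (hφ : Differentiable ℝ φ)
    (hψ : Continuous ψ) (hφpos : ∀ x ∈ Ioo a b, 0 < φ x) (hψpos : ∀ x ∈ Ioo a b, 0 < ψ x)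
    (hb : φ b = 0) : 0 ≤ wronskian φ ψ b := by
  have hψb : 0 ≤ ψ b := by
    refine closure_minimal (fun x hx => (hψpos x hx).le) (isClosed_Ici.preimage hψ) ?_
    rw [closure_Ioo hab.ne]
    exact right_mem_Icc.2 hab.le
  have hslope : Tendsto (slope φ b) (𝓝[<] b) (𝓝 (deriv φ b)) :=
    (hasDerivWithinAt_iff_tendsto_slope' self_notMem_Iio).1 (hφ b).hasDerivAt.hasDerivWithinAt
  have hφb : deriv φ b ≤ 0 := by
    refine le_of_tendsto hslope ?_
    filter_upwards [Ioo_mem_nhdsLT hab] with x hx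
    rw [slope_def_field, hb, sub_zero]
    exact div_nonpos_of_nonneg_of_nonpos (hφpos x hx).le (sub_nonpos.2 hx.2.le)
  rw [wronskian, hb, zero_mul, zero_sub, neg_nonneg]
  exact mul_nonpos_of_nonpos_of_nonneg hφb hψb

theorem hasDerivAt_div_of_wronskian {x : ℝ} (hφ : Differentiable ℝ φ) (hψ : Differentiable ℝ ψ)
    (hx : φ x ≠ 0) : HasDerivAt (fun y => ψ y / φ y) (wronskian φ ψ x / φ x ^ 2) x :=
  ((hψ x).hasDerivAt.div (hφ x).hasDerivAt hx).congr_deriv (by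
    rw [wronskian]
    ring)

theorem exists_nonpos_of_wronskian_le {c δ M : ℝ} (hφ : Differentiable ℝ φ)
    (hψ : Differentiable ℝ ψ) (hM : ∀ x, |φ x| ≤ M) (hφpos : ∀ x ∈ Ici c, 0 < φ x) (hδ : 0 < δ)
    (hw : ∀ x ∈ Ici c, wronskian φ ψ x ≤ -δ) : ∃ x ∈ Ici c, ψ x ≤ 0 := by
  have hMpos : 0 < M := (abs_pos.2 (hφpos c self_mem_Ici).ne').trans_le (hM c)
  have hdiv : ∀ x ∈ Ici c, HasDerivAt (fun y => ψ y / φ y) (wronskian φ ψ x / φ x ^ 2) x :=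
    fun x hx => hasDerivAt_div_of_wronskian hφ hψ (hφpos x hx).ne'
  have hslope : ∀ x ∈ Ici c, ψ x / φ x - ψ c / φ c ≤ -δ / M ^ 2 * (x - c) := fun x hx =>
    (convex_Ici c).image_sub_le_mul_sub_of_deriv_le
      (fun y hy => (hdiv y hy).continuousAt.continuousWithinAt)
      (fun y hy => (hdiv y (interior_subset hy)).differentiableAt.differentiableWithinAt)
      (fun y hy => by
        have hy' := interior_subset hy
        rw [(hdiv y hy').deriv, div_le_div_iff₀ (pow_pos (hφpos y hy') 2) (by positivity)]
        have hsq : φ y ^ 2 ≤ M ^ 2 := sq_le_sq' (abs_le.1 (hM y)).1 (abs_le.1 (hM y)).2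
        nlinarith [hw y hy', hsq])
      c self_mem_Ici x hx hx
  set x := c + |ψ c / φ c| * M ^ 2 / δ with hxdef
  have hx : x ∈ Ici c := by
    simp only [hxdef, mem_Ici, le_add_iff_nonneg_right]
    positivity
  refine ⟨x, hx, ?_⟩
  have hbound : ψ x / φ x ≤ ψ c / φ c - |ψ c / φ c| := by
    have hval : -δ / M ^ 2 * (x - c) = -|ψ c / φ c| := by
      rw [hxdef]
      field_simp
      ring
    linarith [hslope x hx]
  have hnonpos : ψ x / φ x ≤ 0 := hbound.trans (sub_nonpos.2 (le_abs_self _))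
  simpa using (div_le_iff₀ (hφpos x hx)).1 hnonpos

section NodalInterval

variable {J : Set ℝ} {M : ℝ} (hφ : IsSolution Q φ) (hψ : IsSolution q ψ) (hM : ∀ x, |φ x| ≤ M)
  (hJ : IsOpen J) (hJconn : J.OrdConnected) (hfrontier : ∀ x ∈ frontier J, φ x = 0)
  (hqQ : ∀ x ∈ J, q x < Q x)

include hφ hψ hM hJ hJconn hfrontier hqQ

theorem IsSolution.wronskian_nonneg (hφpos : ∀ x ∈ J, 0 < φ x) (hψpos : ∀ x ∈ J, 0 < ψ x) {c : ℝ}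
    (hc : c ∈ J) : 0 ≤ wronskian φ ψ c := by
  have hpos : ∀ x ∈ J, 0 < φ x * ψ x := fun x hx => mul_pos (hφpos x hx) (hψpos x hx)
  by_contra! hneg
  by_cases hbdd : BddAbove J
  · have hlub : IsLUB J (sSup J) := isLUB_csSup ⟨c, hc⟩ hbdd
    have hlt : J ⊆ Iio (sSup J) := by
      rw [← interior_Iic]
      exact interior_maximal (fun _ hx => hlub.1 hx) hJ
    have hcb : c < sSup J := hlt hc
    have hsub : Ioo c (sSup J) ⊆ J := fun x hx =>
      let ⟨y, hy, hxy⟩ := (lt_isLUB_iff hlub).1 hx.2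
      hJconn.out hc hy ⟨hx.1.le, hxy.le⟩
    have hend : φ (sSup J) = 0 := hfrontier _ <| by
      rw [hJ.frontier_eq]
      exact ⟨hlub.mem_closure ⟨c, hc⟩, fun h => lt_irrefl (sSup J) (hlt h)⟩
    have hanti : StrictAntiOn (wronskian φ ψ) (Icc c (sSup J)) :=
      hφ.strictAntiOn_wronskian hψ (convex_Icc _ _)
        (by rw [interior_Icc]; exact fun x hx => hqQ x (hsub hx))
        (by rw [interior_Icc]; exact fun x hx => hpos x (hsub hx))
    have hnonneg := wronskian_nonneg_of_pos_left hcb hφ.differentiable hψ.continuous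
      (fun x hx => hφpos x (hsub hx)) (fun x hx => hψpos x (hsub hx)) hend
    linarith [hanti (left_mem_Icc.2 hcb.le) (right_mem_Icc.2 hcb.le) hcb]
  · have hsub : Ici c ⊆ J := fun x hx =>
      let ⟨y, hy, hxy⟩ := not_bddAbove_iff.1 hbdd x
      hJconn.out hc hy ⟨hx, hxy.le⟩
    have hanti := hφ.strictAntiOn_wronskian hψ hJconn.convex
      (fun x hx => hqQ x (interior_subset hx)) fun x hx => hpos x (interior_subset hx)
    obtain ⟨x, hx, hx0⟩ := exists_nonpos_of_wronskian_le hφ.differentiable hψ.differentiable hM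
      (fun x hx => hφpos x (hsub hx)) (neg_pos.2 hneg)
      fun x hx => by simpa using hanti.antitoneOn hc (hsub hx) hx
    exact (hψpos x (hsub hx)).not_ge hx0

theorem IsSolution.wronskian_nonpos (hφpos : ∀ x ∈ J, 0 < φ x) (hψpos : ∀ x ∈ J, 0 < ψ x) {c : ℝ}
    (hc : c ∈ J) : wronskian φ ψ c ≤ 0 := by
  have hreflect := hφ.comp_neg.wronskian_nonneg hψ.comp_neg (fun x => hM (-x)) (J := Neg.neg ⁻¹' J)
    (hJ.preimage continuous_neg) (hJconn.preimage_anti fun _ _ => neg_le_neg)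
    (fun x hx => hfrontier _ (by
      rwa [show Neg.neg ⁻¹' J = Homeomorph.neg ℝ ⁻¹' J from rfl,
        ← (Homeomorph.neg ℝ).preimage_frontier] at hx))
    (fun x hx => hqQ _ hx) (fun x hx => hφpos _ hx) (fun x hx => hψpos _ hx) (c := -c)
    (by simpa using hc)
  rwa [wronskian_comp_neg, neg_neg, neg_nonneg] at hreflect

theorem IsSolution.exists_eq_zero_of_nodal (hJne : J.Nonempty) (hφ0 : ∀ x ∈ J, φ x ≠ 0) :
    ∃ ξ ∈ J, ψ ξ = 0 := by
  obtain ⟨c, hc⟩ := hJne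
  by_contra! hψ0
  have hφpos : ∀ x ∈ J, 0 < φ c * φ x := fun x =>
    mul_pos_of_forall_ne_zero hJconn hφ.continuous.continuousOn hφ0 hc
  have hψpos : ∀ x ∈ J, 0 < ψ c * ψ x := fun x =>
    mul_pos_of_forall_ne_zero hJconn hψ.continuous.continuousOn hψ0 hc
  have hMc : ∀ x, |φ c * φ x| ≤ |φ c| * M := fun x => by
    rw [abs_mul]
    exact mul_le_mul_of_nonneg_left (hM x) (abs_nonneg _)
  have hfrontierc : ∀ x ∈ frontier J, φ c * φ x = 0 := fun x hx => by rw [hfrontier x hx, mul_zero]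
  have hφc := hφ.const_mul (φ c)
  have hψc := hψ.const_mul (ψ c)
  obtain ⟨d, hcd, hd⟩ := exists_Ico_subset_of_mem_nhds (hJ.mem_nhds hc) (exists_gt c)
  have hmid : (c + d) / 2 ∈ J := hd ⟨by linarith, by linarith⟩
  have hlt := hφc.strictAntiOn_wronskian hψc hJconn.convex
    (fun x hx => hqQ x (interior_subset hx))
    (fun x hx => mul_pos (hφpos x (interior_subset hx)) (hψpos x (interior_subset hx)))
    hc hmid (by linarith)
  linarith [hφc.wronskian_nonneg hψc hMc hJ hJconn hfrontierc hqQ hφpos hψpos hmid,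
    hφc.wronskian_nonpos hψc hMc hJ hJconn hfrontierc hqQ hφpos hψpos hc]

end NodalInterval

theorem isOpen_ordConnectedComponent {s : Set ℝ} (hs : IsOpen s) (x : ℝ) :
    IsOpen (ordConnectedComponent s x) :=
  isOpen_iff_mem_nhds.2 fun y hy => by
    rw [ordConnectedComponent_eq (mem_ordConnectedComponent.1 hy), ordConnectedComponent_mem_nhds]
    exact hs.mem_nhds (ordConnectedComponent_subset hy)

theorem notMem_of_mem_frontier_ordConnectedComponent {s : Set ℝ} (hs : IsOpen s) {x y : ℝ}
    (hy : y ∈ frontier (ordConnectedComponent s x)) : y ∉ s := fun hys => by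
  rw [(isOpen_ordConnectedComponent hs x).frontier_eq] at hy
  obtain ⟨z, hzy, hzx⟩ := mem_closure_iff_nhds.1 hy.1 _
    (ordConnectedComponent_mem_nhds.2 (hs.mem_nhds hys))
  exact hy.2 (mem_ordConnectedComponent_trans hzx (mem_ordConnectedComponent_comm.1 hzy))

theorem HasSimpleZeros.eventually_mem_and_ne_zero (hsimple : HasSimpleZeros φ)
    (hφ : Differentiable ℝ φ) {z : ℝ} (hz : φ z = 0) {s : Set ℝ} (hs : s ∈ 𝓝 z) :
    ∀ᶠ x in 𝓝[≠] z, x ∈ s ∧ φ x ≠ 0 :=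
  (eventually_nhdsWithin_of_eventually_nhds hs).and
    ((hφ z).hasDerivAt.eventually_ne (hsimple z hz))

variable {I : Set ℝ} {M : ℝ} (hφ : IsSolution Q φ) (hψ : IsSolution q ψ) (hM : ∀ x, |φ x| ≤ M)
  (hI : IsOpen I) (hfrontier : ∀ x ∈ frontier I, φ x = 0) (hqQ : ∀ x ∈ I, q x < Q x)

include hφ hψ hM hI hfrontier hqQ

theorem IsSolution.exists_eq_zero_of_ne_zero {c : ℝ} (hc : c ∈ I) (hφc : φ c ≠ 0) :
    ∃ ξ ∈ I, ψ ξ = 0 ∧ ∀ x ∈ uIcc c ξ, φ x ≠ 0 := by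
  set s := I \ zeroSet φ
  have hs_open : IsOpen s := hI.sdiff (isClosed_singleton.preimage hφ.continuous)
  have hfrontierJ : ∀ x ∈ frontier (ordConnectedComponent s c), φ x = 0 := fun x hx => by
    by_cases hxI : x ∈ I
    · by_contra hφx
      exact notMem_of_mem_frontier_ordConnectedComponent hs_open hx ⟨hxI, hφx⟩
    · have hx_closure : x ∈ closure I := closure_mono
        (ordConnectedComponent_subset.trans sdiff_subset) (frontier_subset_closure hx)
      exact hfrontier x (hI.frontier_eq ▸ ⟨hx_closure, hxI⟩)
  obtain ⟨ξ, hξ, hξ0⟩ := hφ.exists_eq_zero_of_nodal hψ hM (isOpen_ordConnectedComponent hs_open c)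
    inferInstance hfrontierJ (fun x hx => hqQ x (ordConnectedComponent_subset hx).1)
    (nonempty_ordConnectedComponent.2 ⟨hc, hφc⟩) fun x hx => (ordConnectedComponent_subset hx).2
  exact ⟨ξ, (ordConnectedComponent_subset hξ).1, hξ0, fun x hx => (hξ hx).2⟩

theorem IsSolution.exists_eq_zero_of_Ico {c z : ℝ} (hcz : c < z) (hc : c ∈ I)
    (hφ0 : ∀ x ∈ Ico c z, φ x ≠ 0) (hz : φ z = 0) :
    ∃ ξ ∈ I, ψ ξ = 0 ∧ ξ < z ∧ ∀ y ∈ zeroSet φ, y < z → y < ξ := by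
  obtain ⟨ξ, hξI, hξ0, hξ⟩ :=
    hφ.exists_eq_zero_of_ne_zero hψ hM hI hfrontier hqQ hc (hφ0 c ⟨le_rfl, hcz⟩)
  have hξz : ξ < z := not_le.1 fun hle => hξ z (Icc_subset_uIcc ⟨hcz.le, hle⟩) hz
  refine ⟨ξ, hξI, hξ0, hξz, fun y hy hyz => ?_⟩
  by_contra! hle
  rcases lt_or_ge y c with hyc | hcy
  · exact hξ y (Icc_subset_uIcc' ⟨hle, hyc.le⟩) hy
  · exact hφ0 y ⟨hcy, hyz⟩ hy

theorem IsSolution.exists_interlacing_zero (hsimple : HasSimpleZeros φ) {z : ℝ}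
    (hz : z ∈ zeroSet φ ∩ I) :
    ∃ ξ ∈ zeroSet ψ ∩ I, ξ < z ∧ ∀ y ∈ zeroSet φ, y < z → y < ξ := by
  have hnear : ∀ᶠ x in 𝓝[<] z, x ∈ I ∧ φ x ≠ 0 :=
    (hsimple.eventually_mem_and_ne_zero hφ.differentiable hz.1 (hI.mem_nhds hz.2)).filter_mono
      (nhdsWithin_mono z fun _ hx => ne_of_lt hx)
  obtain ⟨c, hcz, hc⟩ := mem_nhdsLT_iff_exists_Ico_subset.1 hnear
  obtain ⟨ξ, hξI, hξ0, hξ⟩ := hφ.exists_eq_zero_of_Ico hψ hM hI hfrontier hqQ hcz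
    (hc ⟨le_rfl, hcz⟩).1 (fun x hx => (hc hx).2) hz.1
  exact ⟨ξ, ⟨hξ0, hξI⟩, hξ⟩

theorem IsSolution.exists_zero_gt (hsimple : HasSimpleZeros φ) {z : ℝ}
    (hz : z ∈ zeroSet φ ∩ I) : ∃ ξ ∈ zeroSet ψ ∩ I, z < ξ := by
  have hnear : ∀ᶠ x in 𝓝[>] z, x ∈ I ∧ φ x ≠ 0 :=
    (hsimple.eventually_mem_and_ne_zero hφ.differentiable hz.1 (hI.mem_nhds hz.2)).filter_mono
      (nhdsWithin_mono z fun _ hx => ne_of_gt hx)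
  obtain ⟨c, ⟨hcI, hc0⟩, hzc⟩ := (hnear.and self_mem_nhdsWithin).exists
  obtain ⟨ξ, hξI, hξ0, hξ⟩ := hφ.exists_eq_zero_of_ne_zero hψ hM hI hfrontier hqQ hcI hc0
  refine ⟨ξ, ⟨hξ0, hξI⟩, not_le.1 fun hξz => ?_⟩
  exact hξ z (Icc_subset_uIcc' ⟨hξz, (mem_Ioi.1 hzc).le⟩) hz.1

theorem IsSolution.encard_zeroSet_inter_add_one_le (hsimple : HasSimpleZeros φ)
    (hIne : I.Nonempty) : (zeroSet φ ∩ I).encard + 1 ≤ (zeroSet ψ ∩ I).encard := by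
  choose! ξ hξI hξz hξ using fun z (hz : z ∈ zeroSet φ ∩ I) =>
    hφ.exists_interlacing_zero hψ hM hI hfrontier hqQ hsimple hz
  have hmono : StrictMonoOn ξ (zeroSet φ ∩ I) := fun y hy z hz hyz =>
    (hξz y hy).trans (hξ z hz y hy.1 hyz)
  rcases (zeroSet φ ∩ I).finite_or_infinite with hfin | hinf
  · obtain ⟨ζ, hζ, hlast⟩ : ∃ ζ ∈ zeroSet ψ ∩ I, ∀ z ∈ zeroSet φ ∩ I, ξ z < ζ := by
      rcases (zeroSet φ ∩ I).eq_empty_or_nonempty with hempty | hne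
      · obtain ⟨c, hc⟩ := hIne
        have hφc : φ c ≠ 0 := fun h0 => hempty.subset ⟨h0, hc⟩
        obtain ⟨ζ, hζI, hζ0, -⟩ :=
          hφ.exists_eq_zero_of_ne_zero hψ hM hI hfrontier hqQ hc hφc
        exact ⟨ζ, ⟨hζ0, hζI⟩, by simp [hempty]⟩
      · obtain ⟨m, hm, hmax⟩ := exists_max_image _ id hfin hne
        obtain ⟨ζ, hζ, hmζ⟩ := hφ.exists_zero_gt hψ hM hI hfrontier hqQ hsimple hm
        exact ⟨ζ, hζ, fun z hz => ((hξz z hz).trans_le (hmax z hz)).trans hmζ⟩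
    have hζ_notMem : ζ ∉ ξ '' (zeroSet φ ∩ I) := by
      rintro ⟨z, hz, rfl⟩
      exact lt_irrefl _ (hlast z hz)
    rw [← hmono.injOn.encard_image, ← encard_insert_of_notMem hζ_notMem]
    exact encard_le_encard (insert_subset hζ (image_subset_iff.2 hξI))
  · rw [hinf.encard_eq, top_add, ← hinf.encard_eq]
    exact encard_le_encard_of_injOn hξI hmono.injOn

end Sturm

/-- `u` is the decaying solution at `+∞`, as opposed to the growing ones: eventually `u` and `u'`
do not have the same sign. Behaviour at `-∞` is expressed through `fun x => u (-x)`. -/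
def IsRecessive (u : ℝ → ℝ) : Prop :=
  ∀ᶠ x in atTop, u x * deriv u x ≤ 0

section BehaviourAtInfinity

theorem exists_forall_Ici_of_eventually_cocompact {p : ℝ → Prop} (h : ∀ᶠ x in cocompact ℝ, p x) :
    ∃ R, (∀ x ∈ Ici R, p x) ∧ ∀ x ∈ Ici R, p (-x) := by
  rw [cocompact_eq_atBot_atTop, eventually_sup] at h
  obtain ⟨a, ha⟩ := eventually_atBot.1 h.1
  obtain ⟨b, hb⟩ := eventually_atTop.1 h.2
  exact ⟨max (-a) b, fun x hx => hb x (max_le_iff.1 hx).2,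
    fun x hx => ha _ (neg_le.1 (max_le_iff.1 hx).1)⟩

theorem HasSimpleZeros.not_eqOn_zero {u : ℝ → ℝ} (hsimple : HasSimpleZeros u) {s : Set ℝ}
    (hs : IsOpen s) (hne : s.Nonempty) : ¬EqOn u 0 s := fun hzero => by
  obtain ⟨x, hx⟩ := hne
  exact hsimple x (hzero hx) <| by
    simpa using (hzero.eventuallyEq_of_mem (hs.mem_nhds hx)).deriv_eq

namespace IsSolution

variable {Q u : ℝ → ℝ} {R : ℝ} (hu : IsSolution Q u)

include hu

theorem hasDerivAt_mul_deriv (x : ℝ) :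
    HasDerivAt (fun y => u y * deriv u y) (deriv u x ^ 2 + Q x * u x ^ 2) x :=
  ((hu.hasDerivAt x).mul (hu.hasDerivAt_deriv x)).congr_deriv (by ring)

theorem hasDerivAt_sq (x : ℝ) : HasDerivAt (fun y => u y ^ 2) (2 * (u x * deriv u x)) x :=
  ((hu.hasDerivAt x).pow 2).congr_deriv (by norm_num; ring)

section Nonneg

variable (hQ : ∀ x ∈ Ici R, 0 ≤ Q x)

include hQ

theorem monotoneOn_mul_deriv : MonotoneOn (fun x => u x * deriv u x) (Ici R) :=
  monotoneOn_of_hasDerivWithinAt_nonneg (convex_Ici R)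
    (fun x _ => (hu.hasDerivAt_mul_deriv x).continuousAt.continuousWithinAt)
    (fun x _ => (hu.hasDerivAt_mul_deriv x).hasDerivWithinAt) fun x hx =>
      add_nonneg (sq_nonneg _) (mul_nonneg (hQ x (interior_subset hx)) (sq_nonneg _))

theorem monotoneOn_sq {a : ℝ} (ha : a ∈ Ici R) (hua : 0 ≤ u a * deriv u a) :
    MonotoneOn (fun x => u x ^ 2) (Ici a) :=
  monotoneOn_of_hasDerivWithinAt_nonneg (convex_Ici a)
    (fun x _ => (hu.hasDerivAt_sq x).continuousAt.continuousWithinAt)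
    (fun x _ => (hu.hasDerivAt_sq x).hasDerivWithinAt) fun x hx => by
      have hax := interior_subset hx
      have := hu.monotoneOn_mul_deriv hQ ha (mem_Ici.2 (ha.trans hax)) hax
      positivity [hua.trans this]

theorem sq_le_sq_of_mul_deriv_nonneg {a x : ℝ} (ha : a ∈ Ici R) (hua : 0 ≤ u a * deriv u a)
    (hax : a ≤ x) : u a ^ 2 ≤ u x ^ 2 :=
  hu.monotoneOn_sq hQ ha hua self_mem_Ici hax hax

theorem mul_deriv_nonpos (hrec : IsRecessive u) {x : ℝ} (hx : x ∈ Ici R) :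
    u x * deriv u x ≤ 0 := by
  obtain ⟨y, hy, hxy⟩ := (hrec.and (eventually_ge_atTop x)).exists
  exact (hu.monotoneOn_mul_deriv hQ hx (mem_Ici.2 (hx.trans hxy)) hxy).trans hy

theorem ne_zero_of_mul_deriv_pos {a x : ℝ} (ha : a ∈ Ici R) (hua : 0 < u a * deriv u a)
    (hax : a ≤ x) : u x ≠ 0 := fun hx => by
  have hle := hu.sq_le_sq_of_mul_deriv_nonneg hQ ha hua.le hax
  rw [hx, zero_pow two_ne_zero] at hle
  exact left_ne_zero_of_mul hua.ne' (sq_nonpos_iff _ |>.1 hle)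

theorem zeroSet_inter_Ici_subsingleton (hsimple : HasSimpleZeros u) :
    (zeroSet u ∩ Ici R).Subsingleton := by
  by_contra hnot
  obtain ⟨a, ha, b, hb, hab⟩ := (not_subsingleton_iff.1 hnot).exists_lt
  have hzero : EqOn u 0 (Ioo a b) := fun x hx => by
    have hle := hu.monotoneOn_sq hQ ha.2 (by rw [ha.1, zero_mul]) hx.1.le hab.le hx.2.le
    simp only [show u b = 0 from hb.1] at hle
    exact sq_nonpos_iff _ |>.1 (hle.trans_eq (zero_pow two_ne_zero))
  exact hsimple.not_eqOn_zero isOpen_Ioo (nonempty_Ioo.2 hab) hzero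

theorem isRecessive_of_integrable (hint : Integrable fun x => u x ^ 2) : IsRecessive u := by
  by_contra hnot
  obtain ⟨a, ha, hRa⟩ :=
    ((not_eventually.1 hnot).and_eventually (eventually_ge_atTop R)).exists
  have hua : 0 < u a * deriv u a := not_le.1 ha
  have hconst : IntegrableOn (fun _ => u a ^ 2) (Ici a) :=
    hint.integrableOn.mono' aestronglyMeasurable_const <|
      (ae_restrict_iff' measurableSet_Ici).2 <| .of_forall fun x hx => by
        rw [Real.norm_of_nonneg (sq_nonneg _)]
        exact hu.sq_le_sq_of_mul_deriv_nonneg hQ hRa hua.le hx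
  rw [integrableOn_const_iff] at hconst
  simp [left_ne_zero_of_mul hua.ne'] at hconst

theorem antitoneOn_sq (hrec : IsRecessive u) : AntitoneOn (fun x => u x ^ 2) (Ici R) :=
  antitoneOn_of_hasDerivWithinAt_nonpos (convex_Ici R)
    (fun x _ => (hu.hasDerivAt_sq x).continuousAt.continuousWithinAt)
    (fun x _ => (hu.hasDerivAt_sq x).hasDerivWithinAt) fun x hx => by
      linarith [hu.mul_deriv_nonpos hQ hrec (interior_subset hx)]

theorem ne_zero_of_isRecessive (hrec : IsRecessive u) (hsimple : HasSimpleZeros u) {x : ℝ}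
    (hx : x ∈ Ici R) : u x ≠ 0 := fun hzero =>
  hsimple.not_eqOn_zero isOpen_Ioi nonempty_Ioi (s := Ioi x) fun y hy => by
    have hle := hu.antitoneOn_sq hQ hrec hx (mem_Ici.2 (hx.trans hy.le)) hy.le
    simp only [hzero, zero_pow two_ne_zero] at hle
    exact sq_nonpos_iff _ |>.1 hle

theorem abs_le_of_isRecessive (hrec : IsRecessive u) {x : ℝ} (hx : x ∈ Ici R) :
    |u x| ≤ |u R| :=
  sq_le_sq.1 (hu.antitoneOn_sq hQ hrec self_mem_Ici hx hx)

theorem tendsto_sq_atTop {a : ℝ} (ha : a ∈ Ici R) (hua : 0 < u a * deriv u a) :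
    Tendsto (fun x => u x ^ 2) atTop atTop := by
  have hlin : Tendsto (fun x => 2 * (u a * deriv u a) * (x - a)) atTop atTop :=
    (tendsto_atTop_add_const_right _ (-a) tendsto_id).const_mul_atTop (by positivity)
  refine tendsto_atTop_mono' _ ?_ hlin
  filter_upwards [eventually_ge_atTop a] with x hax
  have hgrowth := (convex_Ici a).mul_sub_le_image_sub_of_le_deriv (C := 2 * (u a * deriv u a))
    (f := fun x => u x ^ 2) (fun x _ => (hu.hasDerivAt_sq x).continuousAt.continuousWithinAt)
    (fun x _ => (hu.hasDerivAt_sq x).differentiableAt.differentiableWithinAt)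
    (fun x hx => by
      have hax := interior_subset hx
      rw [(hu.hasDerivAt_sq x).deriv]
      have := hu.monotoneOn_mul_deriv hQ ha (mem_Ici.2 (ha.trans hax)) hax
      simp only at this
      linarith) a self_mem_Ici x hax hax
  linarith [sq_nonneg (u a)]

theorem exists_mem_Ioi_add_mul_eq_zero (hrec : IsRecessive u) {v : ℝ → ℝ} (hv : IsSolution Q v)
    (hvu : v R = u R) (hvR : 0 < v R * deriv v R) {ε : ℝ} (hε0 : 0 < ε) (hε1 : ε < 1) :
    ∃ y ∈ Ioi R, u y + -ε * v y = 0 := by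
  have hdom := (hv.tendsto_sq_atTop hQ self_mem_Ici hvR).eventually_gt_atTop (u R ^ 2 / ε ^ 2)
  obtain ⟨x, hx, hRx⟩ := (hdom.and (eventually_ge_atTop R)).exists
  have hsame : 0 < v x * u R := hvu ▸ mul_pos_of_forall_ne_zero ordConnected_Ici
    hv.continuous.continuousOn (fun y => hv.ne_zero_of_mul_deriv_pos hQ self_mem_Ici hvR)
    (mem_Ici.2 hRx) self_mem_Ici
  have hlt : |u R| < ε * |v x| := by
    rw [div_lt_iff₀ (by positivity), ← mul_pow, sq_lt_sq, abs_mul, abs_of_pos hε0] at hx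
    linarith
  have huR : 0 < |u R| := abs_pos.2 (right_ne_zero_of_mul hsame.ne')
  have hneg : (u R + -ε * v R) * (u x + -ε * v x) < 0 := by
    have hx_neg : u R * (u x + -ε * v x) < 0 := by
      have hux : u R * u x ≤ |u R| * |u R| := (le_abs_self _).trans <| by
        rw [abs_mul]
        exact mul_le_mul_of_nonneg_left (hu.abs_le_of_isRecessive hQ hrec hRx) (abs_nonneg _)
      have hvx : |u R| * |v x| = u R * v x := by
        rw [← abs_mul, abs_of_pos (by linarith)]
      nlinarith
    rw [hvu, show (u R + -ε * u R) * (u x + -ε * v x)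
      = (1 - ε) * (u R * (u x + -ε * v x)) by ring]
    exact mul_neg_of_pos_of_neg (by linarith) hx_neg
  obtain ⟨y, hy, hy0⟩ := exists_mem_uIcc_eq_zero_of_mul_nonpos
    (hu.add (hv.const_mul (-ε))).continuous.continuousOn hneg.le
  refine ⟨y, lt_of_le_of_ne (uIcc_of_le hRx ▸ hy).1 fun h => hneg.ne ?_, hy0⟩
  rw [h, hy0, zero_mul]

theorem exists_isSolution_succ_le_encard_zeroSet (hQc : Continuous Q) (hrec : IsRecessive u)
    (h0 : u ≠ 0) {n : ℕ} (hn : n ≤ (zeroSet u).encard) :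
    ∃ w, IsSolution Q w ∧ w ≠ 0 ∧ (n + 1 : ℕ) ≤ (zeroSet w).encard := by
  have hsimple := hu.hasSimpleZeros (.of_continuous hQc) h0
  have huR : u R ≠ 0 := hu.ne_zero_of_isRecessive hQ hrec hsimple self_mem_Ici
  have hleft : zeroSet u ∩ Iio R = zeroSet u := inter_eq_left.2 fun x hx =>
    mem_Iio.2 <| not_le.1 fun hRx => hu.ne_zero_of_isRecessive hQ hrec hsimple hRx hx
  obtain ⟨v, hv, hvR, hvR'⟩ := exists_isSolution hQc R (u R) (u R)
  have hw : ∀ ε, IsSolution Q fun x => u x + -ε * v x := fun ε => hu.add (hv.const_mul (-ε))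
  have hpersist := eventually_le_encard_zeroSet_inter (l := 𝓝[>] 0) hsimple
    (fun ε => (hw ε).continuous) (fun x => tendsto_nhdsWithin_of_tendsto_nhds <| by
      have : Continuous fun ε : ℝ => u x + -ε * v x := by fun_prop
      simpa using this.tendsto 0) isOpen_Iio (hleft.symm ▸ hn)
  obtain ⟨ε, hε, hε0, hε1⟩ := (hpersist.and (Ioo_mem_nhdsGT one_pos)).exists
  have hwR : u R + -ε * v R ≠ 0 := by
    rw [hvR, show u R + -ε * u R = (1 - ε) * u R by ring]
    exact mul_ne_zero (by linarith) huR
  obtain ⟨y, hRy, hy⟩ := hu.exists_mem_Ioi_add_mul_eq_zero hQ hrec hv hvR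
    (by rw [hvR, hvR']; exact mul_self_pos.2 huR) hε0 hε1
  refine ⟨_, hw ε, fun h => hwR (congrFun h R), ?_⟩
  calc ((n + 1 : ℕ) : ℕ∞) ≤ (zeroSet (fun x => u x + -ε * v x) ∩ Iio R).encard + 1 := by
        push_cast; gcongr
    _ = (insert y (zeroSet (fun x => u x + -ε * v x) ∩ Iio R)).encard :=
        (encard_insert_of_notMem fun h => lt_asymm (mem_Ioi.1 hRy) h.2).symm
    _ ≤ _ := encard_le_encard (insert_subset hy inter_subset_left)

end Nonneg

theorem integrableOn_sq_Ioi (hQ : ∀ x ∈ Ici R, 1 ≤ Q x) (hrec : IsRecessive u) :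
    IntegrableOn (fun x => u x ^ 2) (Ioi R) := by
  have hcont : Continuous fun x => u x ^ 2 := hu.continuous.pow 2
  refine integrableOn_Ioi_of_intervalIntegral_norm_bounded (-(u R * deriv u R)) R
    (fun _ => hcont.integrableOn_Ioc) tendsto_id ?_
  filter_upwards [eventually_ge_atTop R] with x hx
  have hint := intervalIntegral.integral_le_sub_of_hasDeriv_right_of_le hx
    (fun y _ => (hu.hasDerivAt_mul_deriv y).continuousAt.continuousWithinAt)
    (fun y _ => (hu.hasDerivAt_mul_deriv y).hasDerivWithinAt)
    (φ := fun y => u y ^ 2) hcont.integrableOn_Icc fun y hy => by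
      nlinarith [sq_nonneg (u y), sq_nonneg (deriv u y), hQ y hy.1.le]
  simp only [norm_pow, Real.norm_eq_abs, sq_abs, id]
  linarith [hu.mul_deriv_nonpos (fun y hy => zero_le_one.trans (hQ y hy)) hrec hx]

theorem exists_forall_abs_le (hQ : ∀ᶠ x in cocompact ℝ, 0 ≤ Q x) (hright : IsRecessive u)
    (hleft : IsRecessive fun x => u (-x)) : ∃ M, ∀ x, |u x| ≤ M := by
  obtain ⟨R, hR, hR'⟩ := exists_forall_Ici_of_eventually_cocompact hQ
  obtain ⟨M, hM⟩ := IsLocallyBounded.of_continuous hu.continuous (-R) R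
  refine ⟨max M (max |u R| |u (-R)|), fun x => ?_⟩
  rcases le_total R x with hx | hx
  · exact (hu.abs_le_of_isRecessive hR hright hx).trans (by simp)
  rcases le_total x (-R) with hx' | hx'
  · have := hu.comp_neg.abs_le_of_isRecessive hR' hleft (mem_Ici.2 (le_neg_of_le_neg hx'))
    exact (by simpa using this : |u x| ≤ |u (-R)|).trans (by simp)
  · exact (hM x ⟨hx', hx⟩).trans (le_max_left _ _)

theorem integrable_sq (hQ : ∀ᶠ x in cocompact ℝ, 1 ≤ Q x) (hright : IsRecessive u)
    (hleft : IsRecessive fun x => u (-x)) : Integrable fun x => u x ^ 2 := by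
  obtain ⟨R, hR, hR'⟩ := exists_forall_Ici_of_eventually_cocompact hQ
  have hIio : IntegrableOn (fun x => u x ^ 2) (Iio (-R)) :=
    ((Measure.measurePreserving_neg volume).integrableOn_comp_preimage
      (Homeomorph.neg ℝ).measurableEmbedding).1 <| by
        simpa [Function.comp_def] using hu.comp_neg.integrableOn_sq_Ioi hR' hleft
  have hIcc : IntegrableOn (fun x => u x ^ 2) (Icc (-R) R) :=
    (hu.continuous.pow 2).integrableOn_Icc
  refine integrableOn_univ.1 <|
    ((hIio.union hIcc).union (hu.integrableOn_sq_Ioi hR hright)).mono_set fun x _ => ?_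
  simp only [mem_union, mem_Iio, mem_Icc, mem_Ioi]
  grind

end IsSolution

end BehaviourAtInfinity

section Compactness

theorem encard_zeroSet_comp_neg_inter (u : ℝ → ℝ) (s : Set ℝ) :
    (zeroSet (fun x => u (-x)) ∩ s).encard = (zeroSet u ∩ -s).encard := by
  rw [← encard_neg (zeroSet u ∩ -s), inter_neg, neg_neg]
  rfl

theorem encard_zeroSet_comp_neg (u : ℝ → ℝ) :
    (zeroSet fun x => u (-x)).encard = (zeroSet u).encard := by
  simpa using encard_zeroSet_comp_neg_inter u univ

theorem HasSimpleZeros.comp_neg {u : ℝ → ℝ} (hu : HasSimpleZeros u) :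
    HasSimpleZeros fun x => u (-x) := fun a ha => by
  simpa only [deriv_comp_neg, ne_eq, neg_eq_zero] using hu (-a) ha

theorem exists_isSolution_tendstoLocallyUniformly_phase {ι : Type*} {l : Ultrafilter ι}
    {Qs : ι → ℝ → ℝ} {Q : ℝ → ℝ} {us : ι → ℝ → ℝ} (hQ : Continuous Q)
    (hQs : TendstoLocallyUniformly Qs Q l) (hus : ∀ i, IsSolution (Qs i) (us i))
    (hnorm : ∀ i, ‖phase (us i) 0‖ = 1) :
    ∃ u, IsSolution Q u ∧ u ≠ 0 ∧ TendstoLocallyUniformly (fun i => phase (us i)) (phase u) l := by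
  obtain ⟨p, hp, hlim⟩ := (isCompact_sphere (0 : ℝ × ℝ) 1).ultrafilter_le_nhds'
    (l.map fun i => phase (us i) 0) (Ultrafilter.mem_map.2 <| univ_mem' fun i =>
      mem_sphere_zero_iff_norm.2 (hnorm i))
  obtain ⟨u, hu, hu0, hu0'⟩ := exists_isSolution hQ 0 p.1 p.2
  have hphase : phase u 0 = p := Prod.ext hu0 hu0'
  refine ⟨u, hu, fun h => ?_, tendstoLocallyUniformly_phase (.of_continuous hQ) hQs hu hus
    (hphase.symm ▸ hlim)⟩
  have hp1 : ‖phase u 0‖ = 1 := hphase ▸ mem_sphere_zero_iff_norm.1 hp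
  simp [phase, h] at hp1

variable {ι : Type*} {l : Filter ι} {Qs : ι → ℝ → ℝ} {us : ι → ℝ → ℝ} {u : ℝ → ℝ} {R : ℝ}

open scoped Classical in
/-- The number of zeros which solutions close to `u` may have near `+∞`, where `u` has none. -/
noncomputable def escapingZeros (u : ℝ → ℝ) : ℕ :=
  if IsRecessive u then 1 else 0

theorem escapingZeros_le_one (u : ℝ → ℝ) : escapingZeros u ≤ 1 := by
  unfold escapingZeros
  split_ifs <;> simp

theorem isRecessive_of_escapingZeros_ne_zero (h : escapingZeros u ≠ 0) : IsRecessive u :=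
  of_not_not fun hnot => h (if_neg hnot)

theorem exists_eventually_encard_zeroSet_inter_Ici_le
    (hus : ∀ i, IsSolution (Qs i) (us i)) (hsimple : ∀ i, HasSimpleZeros (us i))
    (hnonneg : ∀ᶠ i in l, ∀ x ∈ Ici R, 0 ≤ Qs i x)
    (hlim : ∀ x, Tendsto (fun i => us i x * deriv (us i) x) l (𝓝 (u x * deriv u x))) :
    ∃ T, ∀ᶠ i in l, (zeroSet (us i) ∩ Ici T).encard ≤ escapingZeros u := by
  by_cases hrec : IsRecessive u
  · refine ⟨R, hnonneg.mono fun i hi => ?_⟩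
    simp only [escapingZeros, if_pos hrec, Nat.cast_one, encard_le_one_iff_subsingleton]
    exact (hus i).zeroSet_inter_Ici_subsingleton hi (hsimple i)
  · obtain ⟨T, hT, hRT⟩ :=
      ((not_eventually.1 hrec).and_eventually (eventually_ge_atTop R)).exists
    refine ⟨T, (hnonneg.and ((hlim T).eventually_const_lt (not_le.1 hT))).mono fun i hi => ?_⟩
    simp only [escapingZeros, if_neg hrec, Nat.cast_zero, nonpos_iff_eq_zero, encard_eq_zero]
    exact eq_empty_of_forall_notMem fun x hx =>
      (hus i).ne_zero_of_mul_deriv_pos hi.1 hRT hi.2 hx.2 hx.1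

theorem eventually_encard_zeroSet_le (hsimple : HasSimpleZeros u) (hu : Continuous (phase u))
    (hus : ∀ i, IsSolution (Qs i) (us i)) (hsimples : ∀ i, HasSimpleZeros (us i))
    (hnonneg : ∀ᶠ i in l, ∀ x ∈ Ici R, 0 ≤ Qs i x ∧ 0 ≤ Qs i (-x))
    (hlim : TendstoLocallyUniformly (fun i => phase (us i)) (phase u) l) :
    ∀ᶠ i in l, (zeroSet (us i)).encard ≤
      (zeroSet u).encard + (escapingZeros u + escapingZeros fun x => u (-x) : ℕ) := by
  have hpoint : ∀ x, Tendsto (fun i => us i x * deriv (us i) x) l (𝓝 (u x * deriv u x)) :=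
    fun x => by
      have hx := hlim.tendstoLocallyUniformlyOn (s := univ) |>.tendsto_at (mem_univ x)
      exact hx.fst_nhds.mul hx.snd_nhds
  obtain ⟨T, hT⟩ := exists_eventually_encard_zeroSet_inter_Ici_le hus hsimples
    (hnonneg.mono fun i hi x hx => (hi x hx).1) hpoint
  obtain ⟨T', hT'⟩ := exists_eventually_encard_zeroSet_inter_Ici_le (u := fun x => u (-x))
    (fun i => (hus i).comp_neg) (fun i => (hsimples i).comp_neg)
    (hnonneg.mono fun i hi x hx => (hi x hx).2)
    (fun x => by simpa only [deriv_comp_neg, mul_neg] using (hpoint (-x)).neg)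
  filter_upwards [hT, hT', eventually_encard_zeroSet_inter_le hsimple hu
    (fun i => (hus i).differentiable) hlim (isCompact_Icc (a := -T') (b := T))] with i hi hi' hK
  rw [encard_zeroSet_comp_neg_inter, neg_Ici] at hi'
  have hcover : zeroSet (us i) ⊆ (zeroSet (us i) ∩ Icc (-T') T) ∪
      ((zeroSet (us i) ∩ Ici T) ∪ (zeroSet (us i) ∩ Iic (-T'))) := fun x hx => by
    simp only [mem_union, mem_inter_iff, hx, true_and, mem_Icc, mem_Ici, mem_Iic]
    grind
  calc (zeroSet (us i)).encard ≤ _ := (encard_le_encard hcover).trans (encard_union_le _ _)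
    _ ≤ (zeroSet u).encard + (escapingZeros u + escapingZeros fun x => u (-x) : ℕ) := by
      push_cast
      exact add_le_add (hK.trans (encard_le_encard inter_subset_left))
        ((encard_union_le _ _).trans (add_le_add hi hi'))

end Compactness

/-- `φ` is an `L²` eigenfunction of the Schrödinger operator `-d²/dx² + W` for the energy `e`. -/
structure IsEigenfunction (W : ℝ → ℝ) (e : ℝ) (φ : ℝ → ℝ) : Prop where
  isSolution : IsSolution (fun x => W x - e) φ
  ne_zero : φ ≠ 0
  integrable_sq : Integrable fun x => φ x ^ 2

/-- The energies at which every nontrivial solution of `u'' = (W - e) u` has at most `n` zeros;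
the supremum for `n + 1` is the eigenvalue whose eigenfunction has `n` zeros. -/
def fewZerosEnergies (W : ℝ → ℝ) (n : ℕ) : Set ℝ :=
  {e | ∀ u, IsSolution (fun x => W x - e) u → u ≠ 0 → (zeroSet u).encard ≤ n}

section OscillationTheorem

variable {W : ℝ → ℝ} {e : ℝ}

theorem mem_fewZerosEnergies_of_forall_le (hW : IsLocallyBounded W) (he : ∀ x, e ≤ W x) (n : ℕ) :
    e ∈ fewZerosEnergies W (n + 1) := fun u hu h0 => by
  have hone : (zeroSet u).encard ≤ 1 := encard_le_one_iff.2 fun a b ha hb =>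
    hu.zeroSet_inter_Ici_subsingleton (R := min a b) (fun x _ => sub_nonneg.2 (he x))
      (hu.hasSimpleZeros (hW.sub_const e) h0) ⟨ha, min_le_left a b⟩ ⟨hb, min_le_right a b⟩
  exact hone.trans (by simp)

theorem isSolution_sin : IsSolution (fun _ => -1) Real.sin :=
  isSolution_of_hasDerivAt Real.hasDerivAt_sin fun x => by simpa using Real.hasDerivAt_cos x

theorem le_encard_zeroSet_sin_inter_Ioo (n : ℕ) :
    n ≤ (zeroSet Real.sin ∩ Ioo 0 ((n + 1) * Real.pi)).encard := by
  have hmem : (fun i : ℕ => (i + 1) * Real.pi) '' Finset.range n ⊆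
      zeroSet Real.sin ∩ Ioo 0 ((n + 1) * Real.pi) := by
    rintro _ ⟨i, hi, rfl⟩
    refine ⟨by simpa [zeroSet] using Real.sin_nat_mul_pi (i + 1), by positivity, ?_⟩
    have hin : (i : ℝ) < n := Nat.cast_lt.2 (by simpa using hi)
    simp only
    gcongr
  have hinj : Function.Injective fun i : ℕ => ((i : ℝ) + 1) * Real.pi := fun i j hij => by
    simpa only [mul_left_inj' Real.pi_ne_zero, add_left_inj, Nat.cast_inj] using hij
  calc (n : ℕ∞) = ((fun i : ℕ => (i + 1) * Real.pi) '' Finset.range n).encard := by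
        rw [hinj.encard_image, encard_coe_eq_coe_finsetCard, Finset.card_range]
    _ ≤ _ := encard_le_encard hmem

theorem IsSolution.add_one_le_encard_zeroSet {q u : ℝ → ℝ} (hu : IsSolution q u) (n : ℕ)
    (hq : ∀ x ∈ Ioo 0 ((n + 1) * Real.pi), q x < -1) : n + 1 ≤ (zeroSet u).encard := by
  have hsimple : HasSimpleZeros Real.sin :=
    isSolution_sin.hasSimpleZeros (.of_continuous continuous_const) fun h => by
      simpa using congrFun h (Real.pi / 2)
  have hsturm := isSolution_sin.encard_zeroSet_inter_add_one_le hu Real.abs_sin_le_one isOpen_Ioo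
    (fun x hx => by
      rw [frontier_Ioo (by positivity)] at hx
      rcases hx with rfl | rfl
      exacts [Real.sin_zero, by exact_mod_cast Real.sin_nat_mul_pi (n + 1)])
    hq hsimple (nonempty_Ioo.2 (by positivity))
  calc (n : ℕ∞) + 1 ≤ (zeroSet Real.sin ∩ Ioo 0 ((n + 1) * Real.pi)).encard + 1 :=
        add_le_add_left (le_encard_zeroSet_sin_inter_Ioo n) 1
    _ ≤ (zeroSet u).encard := hsturm.trans (encard_le_encard inter_subset_left)

theorem bddAbove_fewZerosEnergies (hW : Continuous W) (n : ℕ) :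
    BddAbove (fewZerosEnergies W n) := by
  obtain ⟨K, hK⟩ := IsLocallyBounded.of_continuous hW 0 ((n + 1) * Real.pi)
  refine ⟨K + 1, fun e he => le_of_not_gt fun hlt => ?_⟩
  obtain ⟨u, hu, hu0, -⟩ :=
    exists_isSolution (Q := fun x => W x - e) (hW.sub continuous_const) 0 1 0
  have hmany := hu.add_one_le_encard_zeroSet n fun x hx => by
    linarith [(le_abs_self _).trans (hK x (Ioo_subset_Icc_self hx))]
  have hfew := he u hu fun h => one_ne_zero (hu0.symm.trans (congrFun h 0))
  exact absurd (hmany.trans hfew) (by norm_cast; omega)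

theorem notMem_fewZerosEnergies_iff {n : ℕ} : e ∉ fewZerosEnergies W n ↔
    ∃ u, IsSolution (fun x => W x - e) u ∧ u ≠ 0 ∧ (n + 1 : ℕ) ≤ (zeroSet u).encard := by
  simp only [fewZerosEnergies, mem_ofPred_eq, not_forall, not_le, exists_prop, Nat.cast_add_one,
    ENat.add_one_le_iff (ENat.natCast_ne_top n)]

theorem isClosed_fewZerosEnergies (hW : Continuous W) (n : ℕ) :
    IsClosed (fewZerosEnergies W n) := by
  refine isOpen_compl_iff.1 (isOpen_iff_mem_nhds.2 fun e he => ?_)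
  obtain ⟨u, hu, h0, hmany⟩ := notMem_fewZerosEnergies_iff.1 he
  have hWc : ∀ e, Continuous fun x => W x - e := fun e => hW.sub continuous_const
  choose us hus hus0 hus0' using fun e' => exists_isSolution (hWc e') 0 (u 0) (deriv u 0)
  have hsimple := hu.hasSimpleZeros (.of_continuous (hWc e)) h0
  have hlim := tendstoLocallyUniformly_phase (.of_continuous (hWc e))
    (tendstoLocallyUniformly_sub_const W tendsto_id) hu hus <|
      tendsto_const_nhds.congr fun e' => by simp [phase, hus0, hus0']
  have hpersist := eventually_le_encard_zeroSet_inter (U := univ) hsimple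
    (fun e' => (hus e').continuous) (fun x =>
      (hlim.tendstoLocallyUniformlyOn.tendsto_at (mem_univ x)).fst_nhds) isOpen_univ
    (by rwa [inter_univ])
  filter_upwards [hpersist] with e' he'
  rw [inter_univ] at he'
  have hne : us e' ≠ 0 := fun h => hsimple 0 (by rw [← hus0 e', h]; rfl) <| by
    rw [← hus0' e', h]; exact deriv_const 0 0
  exact notMem_fewZerosEnergies_iff.2 ⟨_, hus e', hne, he'⟩

theorem fewZerosEnergies_comp_neg (W : ℝ → ℝ) (n : ℕ) :
    fewZerosEnergies (fun x => W (-x)) n = fewZerosEnergies W n := by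
  have hsub : ∀ W : ℝ → ℝ, fewZerosEnergies W n ⊆ fewZerosEnergies (fun x => W (-x)) n :=
    fun W e he u hu h0 => by
      rw [← encard_zeroSet_comp_neg]
      refine he _ (by simpa using hu.comp_neg) fun h => h0 (funext fun x => ?_)
      simpa using congrFun h (-x)
  exact (hsub _).antisymm' (by simpa using hsub fun x => W (-x))

theorem IsSolution.encard_zeroSet_add_escapingZeros_le {u : ℝ → ℝ} {R : ℝ} {n : ℕ}
    (hW : Continuous W) (hR : ∀ x ∈ Ici R, 0 ≤ W x - e) (he : e ∈ fewZerosEnergies W (n + 1))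
    (hu : IsSolution (fun x => W x - e) u) (h0 : u ≠ 0) :
    (zeroSet u).encard + escapingZeros u ≤ (n + 1 : ℕ) := by
  by_cases hrec : IsRecessive u
  · rw [escapingZeros, if_pos hrec, Nat.cast_one, Nat.cast_add_one]
    gcongr
    refine le_of_not_gt fun hlt => ?_
    obtain ⟨w, hw, hw0, hmany⟩ := hu.exists_isSolution_succ_le_encard_zeroSet hR
      (hW.sub continuous_const) hrec h0 (n := n + 1) (by simpa using Order.add_one_le_of_lt hlt)
    exact notMem_fewZerosEnergies_iff.2 ⟨w, hw, hw0, hmany⟩ he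
  · simpa [escapingZeros, hrec] using he u hu h0

theorem exists_isSolution_norm_phase_eq_one (hW : Continuous W) {n : ℕ}
    (he : e ∉ fewZerosEnergies W n) :
    ∃ u, IsSolution (fun x => W x - e) u ∧ ‖phase u 0‖ = 1 ∧
      (n + 1 : ℕ) ≤ (zeroSet u).encard := by
  obtain ⟨u, hu, h0, hmany⟩ := notMem_fewZerosEnergies_iff.1 he
  have hphase0 : phase u 0 ≠ 0 := fun h =>
    hu.hasSimpleZeros (.of_continuous (hW.sub continuous_const)) h0 0
      (congrArg Prod.fst h) (congrArg Prod.snd h)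
  have hc : ‖phase u 0‖⁻¹ ≠ 0 := inv_ne_zero (norm_ne_zero_iff.2 hphase0)
  refine ⟨_, hu.const_mul ‖phase u 0‖⁻¹, ?_, ?_⟩
  · have hsmul : phase (fun x => ‖phase u 0‖⁻¹ * u x) 0 = ‖phase u 0‖⁻¹ • phase u 0 :=
      Prod.ext rfl (deriv_const_mul_field _)
    rw [hsmul, norm_smul, norm_inv, norm_norm, inv_mul_cancel₀ (norm_ne_zero_iff.2 hphase0)]
  · simpa [zeroSet, hc] using hmany

theorem exists_isSolution_le_encard_zeroSet_add (hW : Continuous W)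
    (htop : Tendsto W (cocompact ℝ) atTop) {n : ℕ} (he : ∀ e' > e, e' ∉ fewZerosEnergies W n) :
    ∃ u, IsSolution (fun x => W x - e) u ∧ u ≠ 0 ∧ (n + 1 : ℕ) ≤
      (zeroSet u).encard + (escapingZeros u + escapingZeros fun x => u (-x) : ℕ) := by
  obtain ⟨es, -, hes_gt, hes⟩ := exists_seq_strictAnti_tendsto e
  choose us hus hnorm hmany using fun i =>
    exists_isSolution_norm_phase_eq_one hW (he (es i) (hes_gt i))
  have hlb : ∀ e, IsLocallyBounded fun x => W x - e := fun e =>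
    .of_continuous (hW.sub continuous_const)
  let l : Ultrafilter ℕ := .of atTop
  have hes_l : Tendsto es l (𝓝 e) := hes.mono_left (Ultrafilter.of_le _)
  obtain ⟨u, hu, h0, hlim⟩ := exists_isSolution_tendstoLocallyUniformly_phase
    (hW.sub continuous_const) (tendstoLocallyUniformly_sub_const W hes_l) hus hnorm
  obtain ⟨R, hR, hR'⟩ :=
    exists_forall_Ici_of_eventually_cocompact (htop.eventually_ge_atTop (e + 1))
  have hne : ∀ i, us i ≠ 0 := fun i h => by simpa [phase, h] using hnorm i
  have hbound := eventually_encard_zeroSet_le (R := R) (hu.hasSimpleZeros (hlb e) h0)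
    (hu.continuous.prodMk hu.continuous_deriv) hus
    (fun i => (hus i).hasSimpleZeros (hlb _) (hne i))
    ((hes_l.eventually_lt_const (lt_add_one e)).mono fun i hi x hx =>
      ⟨by linarith [hR x hx], by linarith [hR' x hx]⟩) hlim
  obtain ⟨i, hi⟩ := hbound.exists
  exact ⟨u, hu, h0, (hmany i).trans hi⟩

theorem exists_mem_fewZerosEnergies_forall_gt_notMem (hW : Continuous W)
    (htop : Tendsto W (cocompact ℝ) atTop) (n : ℕ) :
    ∃ e ∈ fewZerosEnergies W (n + 1), ∀ e' > e, e' ∉ fewZerosEnergies W (n + 1) := by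
  obtain ⟨x₀, hx₀⟩ := hW.exists_forall_le htop
  have hbdd := bddAbove_fewZerosEnergies hW (n + 1)
  exact ⟨_, (isClosed_fewZerosEnergies hW (n + 1)).csSup_mem
    ⟨_, mem_fewZerosEnergies_of_forall_le (.of_continuous hW) hx₀ n⟩ hbdd,
    fun e' he' hmem => he'.not_ge (le_csSup hbdd hmem)⟩

theorem exists_isEigenfunction_encard_zeroSet_eq (hW : Continuous W)
    (htop : Tendsto W (cocompact ℝ) atTop) (n : ℕ) :
    ∃ e φ, IsEigenfunction W e φ ∧ (zeroSet φ).encard = n := by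
  obtain ⟨e, he, hmax⟩ := exists_mem_fewZerosEnergies_forall_gt_notMem hW htop n
  obtain ⟨φ, hφ, h0, hmany⟩ := exists_isSolution_le_encard_zeroSet_add hW htop hmax
  have hQ : ∀ᶠ x in cocompact ℝ, 1 ≤ W x - e :=
    (htop.eventually_ge_atTop (e + 1)).mono fun x hx => by linarith
  obtain ⟨R, hR, hR'⟩ := exists_forall_Ici_of_eventually_cocompact hQ
  have hright := hφ.encard_zeroSet_add_escapingZeros_le hW
    (fun x hx => zero_le_one.trans (hR x hx)) he h0
  have hleft := hφ.comp_neg.encard_zeroSet_add_escapingZeros_le (W := fun x => W (-x))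
    (hW.comp continuous_neg) (fun x hx => zero_le_one.trans (hR' x hx))
    (fewZerosEnergies_comp_neg W (n + 1) ▸ he) fun h => h0 (funext fun x => by
      simpa using congrFun h (-x))
  rw [encard_zeroSet_comp_neg] at hleft
  have hφ1 := escapingZeros_le_one φ
  have hφ1' := escapingZeros_le_one fun x => φ (-x)
  obtain ⟨z, hz⟩ := ENat.ne_top_iff_exists.1 <|
    ne_top_of_le_ne_top (ENat.natCast_ne_top _) (le_self_add.trans hright)
  rw [← hz] at hright hleft hmany
  norm_cast at hright hleft hmany
  exact ⟨e, φ, ⟨hφ, h0, hφ.integrable_sq hQ (isRecessive_of_escapingZeros_ne_zero (by omega))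
    (isRecessive_of_escapingZeros_ne_zero (by omega))⟩, by rw [← hz]; norm_cast; omega⟩

end OscillationTheorem

namespace IsEigenfunction

variable {W W' φ ψ : ℝ → ℝ} {e e' : ℝ}

theorem hasSimpleZeros (hφ : IsEigenfunction W e φ) (hW : IsLocallyBounded W) :
    HasSimpleZeros φ :=
  hφ.isSolution.hasSimpleZeros (hW.sub_const e) hφ.ne_zero

theorem exists_forall_abs_le (hφ : IsEigenfunction W e φ)
    (htop : Tendsto W (cocompact ℝ) atTop) : ∃ M, ∀ x, |φ x| ≤ M := by
  have hQ : ∀ᶠ x in cocompact ℝ, 0 ≤ W x - e :=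
    (htop.eventually_ge_atTop e).mono fun x hx => sub_nonneg.2 hx
  obtain ⟨R, hR, hR'⟩ := exists_forall_Ici_of_eventually_cocompact hQ
  exact hφ.isSolution.exists_forall_abs_le hQ
    (hφ.isSolution.isRecessive_of_integrable hR hφ.integrable_sq)
    (hφ.isSolution.comp_neg.isRecessive_of_integrable hR' hφ.integrable_sq.comp_neg)

theorem encard_zeroSet_inter_add_one_le (hφ : IsEigenfunction W e φ) (hW : IsLocallyBounded W)
    (htop : Tendsto W (cocompact ℝ) atTop) {q : ℝ → ℝ} (hψ : IsSolution q ψ) {I : Set ℝ}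
    (hI : IsOpen I) (hfrontier : ∀ x ∈ frontier I, φ x = 0) (hlt : ∀ x ∈ I, q x < W x - e)
    (hne : I.Nonempty) : (zeroSet φ ∩ I).encard + 1 ≤ (zeroSet ψ ∩ I).encard :=
  let ⟨_, hM⟩ := hφ.exists_forall_abs_le htop
  hφ.isSolution.encard_zeroSet_inter_add_one_le hψ hM hI hfrontier hlt (hφ.hasSimpleZeros hW) hne

theorem encard_zeroSet_add_one_le (hφ : IsEigenfunction W e φ) (hW : IsLocallyBounded W)
    (htop : Tendsto W (cocompact ℝ) atTop) {q : ℝ → ℝ} (hψ : IsSolution q ψ)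
    (hlt : ∀ x, q x < W x - e) : (zeroSet φ).encard + 1 ≤ (zeroSet ψ).encard := by
  simpa using hφ.encard_zeroSet_inter_add_one_le hW htop hψ isOpen_univ (by simp)
    (fun x _ => hlt x) univ_nonempty

theorem energy_le_of_le (hφ : IsEigenfunction W e φ) (hψ : IsEigenfunction W' e' ψ)
    (hW' : IsLocallyBounded W') (htop' : Tendsto W' (cocompact ℝ) atTop)
    (hle : ∀ x, W x ≤ W' x) {n : ℕ} (hφn : (zeroSet φ).encard = n)
    (hψn : (zeroSet ψ).encard = n) : e ≤ e' := le_of_not_gt fun hlt => by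
  have hsturm := hψ.encard_zeroSet_add_one_le hW' htop' hφ.isSolution fun x => by
    linarith [hle x]
  rw [hφn, hψn] at hsturm
  exact absurd hsturm (by norm_cast; omega)

theorem integrable_const_mul_add_sq (hφ : IsEigenfunction W e φ) (hψ : IsEigenfunction W e' ψ)
    (a b : ℝ) : Integrable fun x => (a * φ x + b * ψ x) ^ 2 := by
  have hφ2 : MemLp φ 2 := (memLp_two_iff_integrable_sq
    hφ.isSolution.continuous.aestronglyMeasurable).2 hφ.integrable_sq
  have hψ2 : MemLp ψ 2 := (memLp_two_iff_integrable_sq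
    hψ.isSolution.continuous.aestronglyMeasurable).2 hψ.integrable_sq
  exact ((hφ2.const_mul a).add (hψ2.const_mul b)).integrable_sq

theorem zeroSet_subset_zeroSet (hφ : IsEigenfunction W e φ) (hψ : IsEigenfunction W e ψ)
    (hW : IsLocallyBounded W) (htop : Tendsto W (cocompact ℝ) atTop) :
    zeroSet φ ⊆ zeroSet ψ := by
  obtain ⟨R, hR, -⟩ := exists_forall_Ici_of_eventually_cocompact (htop.eventually_ge_atTop e)
  have hQ : ∀ x ∈ Ici R, 0 ≤ W x - e := fun x hx => sub_nonneg.2 (hR x hx)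
  have hφR : φ R ≠ 0 := hφ.isSolution.ne_zero_of_isRecessive hQ
    (hφ.isSolution.isRecessive_of_integrable hQ hφ.integrable_sq) (hφ.hasSimpleZeros hW)
    self_mem_Ici
  have hcomb := (hφ.isSolution.const_mul (ψ R)).add (hψ.isSolution.const_mul (-φ R))
  have hcomb0 : (fun x => ψ R * φ x + -φ R * ψ x) = 0 := by
    by_contra hne
    exact hcomb.ne_zero_of_isRecessive hQ (hcomb.isRecessive_of_integrable hQ
      (hφ.integrable_const_mul_add_sq hψ _ _)) (hcomb.hasSimpleZeros (hW.sub_const e) hne)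
      (mem_Ici.2 le_rfl) (by ring)
  intro x hx
  have hprop := congrFun hcomb0 x
  rw [show φ x = 0 from hx] at hprop
  exact (by simpa [hφR] using hprop : ψ x = 0)

end IsEigenfunction

theorem encard_zeroSet_eq_of_strictMono {W : ℝ → ℝ} (hW : Continuous W)
    (htop : Tendsto W (cocompact ℝ) atTop) {ω : ℕ → ℝ} {φ : ℕ → ℝ → ℝ} (hω : StrictMono ω)
    (hφ : ∀ j, IsEigenfunction W (ω j) (φ j))
    (hexh : ∀ e ψ, IsEigenfunction W e ψ → ∃ j, e = ω j) (j : ℕ) :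
    (zeroSet (φ j)).encard = j := by
  have hlb := IsLocallyBounded.of_continuous hW
  choose e ψ hψ hψn using exists_isEigenfunction_encard_zeroSet_eq hW htop
  choose i hi using fun n => hexh (e n) (ψ n) (hψ n)
  have hin : ∀ n, (zeroSet (φ (i n))).encard = n := fun n => by
    have hψ' : IsEigenfunction W (ω (i n)) (ψ n) := hi n ▸ hψ n
    rw [((hφ (i n)).zeroSet_subset_zeroSet hψ' hlb htop).antisymm
      (hψ'.zeroSet_subset_zeroSet (hφ (i n)) hlb htop), hψn]
  have hstep : ∀ n, (zeroSet (φ n)).encard + 1 ≤ (zeroSet (φ (n + 1))).encard := fun n =>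
    (hφ n).encard_zeroSet_add_one_le hlb htop (hφ (n + 1)).isSolution fun x => by
      linarith [hω (lt_add_one n)]
  have hmono : Monotone fun n => (zeroSet (φ n)).encard :=
    monotone_nat_of_le_succ fun n => le_self_add.trans (hstep n)
  have hi_mono : StrictMono i := strictMono_nat_of_lt_succ fun n => not_le.1 fun hle => by
    have := hmono hle
    simp only [hin] at this
    exact absurd this (by norm_cast; omega)
  have hge : ∀ n : ℕ, n ≤ (zeroSet (φ n)).encard := fun n => by
    induction n with
    | zero => simp
    | succ n ih => exact_mod_cast (add_le_add_left ih 1).trans (hstep n)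
  have hij : i j = j := (by exact_mod_cast hin j ▸ hge (i j) : i j ≤ j).antisymm hi_mono.le_apply
  simpa only [hij] using hin j

section HermitePolynomials

open Polynomial

theorem derivative_hermite_succ (n : ℕ) :
    derivative (hermite (n + 1)) = (n + 1 : ℤ[X]) * hermite n := by
  induction n with
  | zero => simp [hermite_succ]
  | succ n ih =>
    rw [hermite_succ (n + 1), derivative_sub, derivative_mul, derivative_X, one_mul, ih,
      hermite_succ n]
    simp only [derivative_mul, derivative_add, derivative_natCast, derivative_one]
    push_cast
    ring

theorem derivative_derivative_hermite (n : ℕ) :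
    derivative (derivative (hermite n)) = X * derivative (hermite n) - (n : ℤ[X]) * hermite n := by
  have h := derivative_hermite_succ n
  rw [hermite_succ, derivative_sub, derivative_mul, derivative_X, one_mul] at h
  linear_combination -h

theorem integrable_eval_mul_exp_neg_mul_sq (p : ℝ[X]) {b : ℝ} (hb : 0 < b) :
    Integrable fun x => p.eval x * Real.exp (-b * x ^ 2) := by
  induction p using Polynomial.induction_on' with
  | add p q hp hq =>
    refine (hp.add hq).congr (.of_forall fun x => ?_)
    simp only [Pi.add_apply, eval_add, add_mul]
  | monomial n a =>
    have hpow : Integrable fun x : ℝ => x ^ n * Real.exp (-b * x ^ 2) := by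
      simpa only [Real.rpow_natCast] using
        integrable_rpow_mul_exp_neg_mul_sq hb (s := n) (by linarith [n.cast_nonneg (α := ℝ)])
    simpa only [eval_monomial, mul_assoc] using hpow.const_mul a

/-- The `n`-th Hermite function `He_n(y) exp(-y² / 4)`, an eigenfunction of `-d²/dy² + y² / 4`. -/
noncomputable def hermiteFunction (n : ℕ) (y : ℝ) : ℝ :=
  aeval y (hermite n) * Real.exp (-(y ^ 2 / 4))

theorem isSolution_hermiteFunction (n : ℕ) :
    IsSolution (fun y => y ^ 2 / 4 - (n + 1 / 2)) (hermiteFunction n) := by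
  have hexp : ∀ y : ℝ, HasDerivAt (fun y => Real.exp (-(y ^ 2 / 4)))
      (Real.exp (-(y ^ 2 / 4)) * (-(y / 2))) y := fun y =>
    (((hasDerivAt_pow 2 y).div_const 4).neg.congr_deriv (by ring)).exp
  refine isSolution_of_hasDerivAt
    (u' := fun y => (aeval y (derivative (hermite n)) - y / 2 * aeval y (hermite n)) *
      Real.exp (-(y ^ 2 / 4)))
    (fun y => (((hermite n).hasDerivAt_aeval y).mul (hexp y)).congr_deriv (by ring)) fun y => ?_
  have hode := congrArg (aeval y) (derivative_derivative_hermite n)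
  simp only [map_sub, map_mul, aeval_X, map_natCast] at hode
  refine (((((derivative (hermite n)).hasDerivAt_aeval y).sub (((hasDerivAt_id' y).div_const 2).mul
    ((hermite n).hasDerivAt_aeval y))).mul (hexp y))).congr_deriv ?_
  simp only [hermiteFunction, Pi.sub_apply, Pi.mul_apply]
  linear_combination Real.exp (-(y ^ 2 / 4)) * hode

theorem integrable_hermiteFunction_sq (n : ℕ) : Integrable fun y => hermiteFunction n y ^ 2 := by
  refine (integrable_eval_mul_exp_neg_mul_sq (((hermite n).map (Int.castRingHom ℝ)) ^ 2)
    (half_pos one_pos)).congr (.of_forall fun y => ?_)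
  simp only [hermiteFunction, mul_pow, ← Real.exp_nat_mul, eval_pow, eval_map, aeval_def,
    algebraMap_int_eq]
  ring_nf

theorem encard_zeroSet_hermiteFunction_le (n : ℕ) : (zeroSet (hermiteFunction n)).encard ≤ n := by
  have hroots : zeroSet (hermiteFunction n) ⊆ (hermite n).rootSet ℝ := fun y hy =>
    (mem_rootSet_of_ne (hermite_monic n).ne_zero).2
      ((mul_eq_zero.1 hy).resolve_right (Real.exp_ne_zero _))
  calc (zeroSet (hermiteFunction n)).encard ≤ ((hermite n).rootSet ℝ).encard :=
        encard_le_encard hroots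
    _ = ((hermite n).rootSet ℝ).ncard := ((hermite n).rootSet_finite ℝ).cast_ncard_eq.symm
    _ ≤ n := by
      have hle := ncard_rootSet_le (hermite n) ℝ
      rw [natDegree_hermite] at hle
      exact_mod_cast hle

theorem hermiteFunction_ne_zero (n : ℕ) : hermiteFunction n ≠ 0 := fun h => by
  have huniv : zeroSet (hermiteFunction n) = univ := by simp [zeroSet, h]
  exact absurd (encard_zeroSet_hermiteFunction_le n) (by simp [huniv, ENat.natCast_ne_top])

end HermitePolynomials

section HarmonicOscillator

variable {b : ℝ} (c : ℝ)

theorem tendsto_const_mul_sub_sq_cocompact (hb : b ≠ 0) :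
    Tendsto (fun x => (b * x - c) ^ 2) (cocompact ℝ) atTop := by
  have haffine := (affineHomeomorph b (-c) hb).isClosedEmbedding.tendsto_cocompact
  refine ((tendsto_pow_atTop two_ne_zero).comp
    (tendsto_norm_cocompact_atTop.comp haffine)).congr fun x => ?_
  simp [sub_eq_add_neg]

theorem IsEigenfunction.add_const {W φ : ℝ → ℝ} {e : ℝ} (hφ : IsEigenfunction W e φ) (C : ℝ) :
    IsEigenfunction (fun x => W x + C) (e + C) φ :=
  ⟨by simpa only [add_sub_add_right_eq_sub] using hφ.isSolution, hφ.ne_zero, hφ.integrable_sq⟩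

/-- The `n`-th Landau function: the eigenfunction of `-d²/dx² + (b x - c)²` for the Landau level
`(2 n + 1) b`, a Hermite function centred at `c / b`. -/
noncomputable def landauFunction (b c : ℝ) (n : ℕ) (x : ℝ) : ℝ :=
  hermiteFunction n (√(2 * b) * (x - c / b))

theorem isEigenfunction_landauFunction (hb : 0 < b) (n : ℕ) :
    IsEigenfunction (fun x => (b * x - c) ^ 2) ((2 * n + 1) * b) (landauFunction b c n) := by
  have hscale : √(2 * b) ≠ 0 := by positivity
  have hsurj : Function.Surjective fun x => √(2 * b) * (x - c / b) :=
    (mul_left_surjective₀ hscale).comp (Equiv.subRight _).surjective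
  refine ⟨?_, fun h => hermiteFunction_ne_zero n (hsurj.injective_comp_right h), ?_⟩
  · convert (isSolution_hermiteFunction n).comp_mul_sub (√(2 * b)) (c / b) using 2 with x
    · have hcentre : b * (c / b) = c := by field_simp
      rw [mul_pow, Real.sq_sqrt (by positivity)]
      linear_combination (2 * b * x - c - b * (c / b)) * hcentre
    · rfl
  · exact ((integrable_hermiteFunction_sq n).comp_mul_left' hscale).comp_sub_right _

theorem encard_zeroSet_landauFunction (hb : 0 < b) (n : ℕ) :
    (zeroSet (landauFunction b c n)).encard = n := by
  have hinj : Function.Injective fun x => √(2 * b) * (x - c / b) :=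
    (mul_right_injective₀ (by positivity)).comp sub_left_injective
  have hmaps : MapsTo (fun x => √(2 * b) * (x - c / b)) (zeroSet (landauFunction b c n))
      (zeroSet (hermiteFunction n)) := fun x hx => hx
  refine ((encard_le_encard_of_injOn hmaps hinj.injOn).trans
    (encard_zeroSet_hermiteFunction_le n)).antisymm ?_
  induction n with
  | zero => simp
  | succ n ih =>
    have hsturm := (isEigenfunction_landauFunction c hb n).encard_zeroSet_add_one_le
      (.of_continuous (by fun_prop)) (tendsto_const_mul_sub_sq_cocompact c hb.ne')
      (isEigenfunction_landauFunction c hb (n + 1)).isSolution fun x => by push_cast; linarith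
    push_cast
    exact (add_le_add_left (ih fun x hx => hx) 1).trans hsturm

end HarmonicOscillator

section FiberOperator

/-- The potential `(B x - k)² + V x` of the fibred operator `h₀(k)`. -/
def fiberPotential (B : ℝ) (V : ℝ → ℝ) (k x : ℝ) : ℝ :=
  (B * x - k) ^ 2 + V x

variable {B k e : ℝ} {V φ : ℝ → ℝ}

theorem tendsto_fiberPotential_cocompact (hB : B ≠ 0) (hV : ∀ x, 0 ≤ V x) :
    Tendsto (fiberPotential B V k) (cocompact ℝ) atTop :=
  tendsto_atTop_mono (fun x => le_add_of_nonneg_right (hV x))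
    (tendsto_const_mul_sub_sq_cocompact k hB)

theorem isLocallyBounded_fiberPotential (hV : IsLocallyBounded V) :
    IsLocallyBounded (fiberPotential B V k) :=
  (IsLocallyBounded.of_continuous (by fun_prop)).add hV

theorem IsEigenvalue.exists_isEigenfunction (h : IsEigenvalue B V k e) :
    ∃ φ, ContDiff ℝ 2 φ ∧ IsEigenfunction (fiberPotential B V k) e φ := by
  obtain ⟨φ, hφ, hne, hint, heq⟩ := h
  refine ⟨φ, hφ, isSolution_of_hasDerivAt
    (fun x => (hφ.differentiable two_ne_zero x).hasDerivAt) fun x => ?_, hne, hint⟩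
  refine (hφ.deriv'.differentiable one_ne_zero x).hasDerivAt.congr_deriv ?_
  simp only [fiberPotential]
  linarith [heq x]

theorem IsSolution.contDiff_two {Q u : ℝ → ℝ} (hQ : Continuous Q) (hu : IsSolution Q u) :
    ContDiff ℝ 2 u := by
  have hderiv : deriv (deriv u) = fun x => Q x * u x := deriv_eq hu.hasDerivAt_deriv
  have hcont : ContDiff ℝ 1 (deriv u) := contDiff_one_iff_deriv.2
    ⟨fun x => (hu.hasDerivAt_deriv x).differentiableAt, hderiv ▸ hQ.mul hu.continuous⟩
  exact contDiff_succ_iff_deriv.2 ⟨hu.differentiable, by simp, hcont⟩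

theorem IsEigenfunction.isEigenvalue (hV : Continuous V)
    (hφ : IsEigenfunction (fiberPotential B V k) e φ) : IsEigenvalue B V k e := by
  refine ⟨φ, hφ.isSolution.contDiff_two ?_, hφ.ne_zero, hφ.integrable_sq, fun x => ?_⟩
  · unfold fiberPotential
    fun_prop
  · rw [(hφ.isSolution.hasDerivAt_deriv x).deriv, fiberPotential]
    ring

end FiberOperator

section ContinuityOfPotential

variable {B k k' e e' x₀ : ℝ} {V φ ψ : ℝ → ℝ}

theorem IsSolution.continuousAt {Q u : ℝ → ℝ} (hu : IsSolution Q u) (hu2 : ContDiff ℝ 2 u)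
    (hx₀ : u x₀ ≠ 0) : ContinuousAt Q x₀ := by
  have hderiv : deriv (deriv u) = fun x => Q x * u x := deriv_eq hu.hasDerivAt_deriv
  have hcont : Continuous (deriv (deriv u)) := hu2.deriv'.continuous_deriv le_rfl
  refine (hcont.continuousAt.div hu.continuous.continuousAt hx₀).congr ?_
  filter_upwards [hu.continuous.continuousAt.eventually_ne hx₀] with x hx
  simp [hderiv, hx]

theorem finite_zeroSet_of_isEigenfunction_fiberPotential (hB : 0 < B)
    (hV : ∀ x, 0 ≤ V x) (hVb : IsLocallyBounded V)
    (hφ : IsEigenfunction (fiberPotential B V k) e φ) : (zeroSet φ).Finite := by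
  obtain ⟨n, hn⟩ := exists_nat_gt (e / B)
  have hsturm := hφ.encard_zeroSet_add_one_le (isLocallyBounded_fiberPotential hVb)
    (tendsto_fiberPotential_cocompact hB.ne' hV) (isEigenfunction_landauFunction k hB n).isSolution
    fun x => by
      rw [div_lt_iff₀ hB] at hn
      have hnB : 0 ≤ n * B := by positivity
      simp only [fiberPotential]
      linarith [hV x]
  rw [encard_zeroSet_landauFunction k hB n] at hsturm
  exact finite_of_encard_le_coe (le_self_add.trans hsturm)

/-- `fiberPotential B V k - fiberPotential B V k'` is affine, so Sturm comparison applies on one of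
the two sides of a common zero. -/
theorem encard_zeroSet_inter_lt_or_lt (hB : 0 < B) (hV : ∀ x, 0 ≤ V x) (hVb : IsLocallyBounded V)
    (hφ : IsEigenfunction (fiberPotential B V k) e φ)
    (hψ : IsEigenfunction (fiberPotential B V k') e' ψ) (hφ₀ : φ x₀ = 0) (hψ₀ : ψ x₀ = 0)
    (hk : k < k') :
    (zeroSet ψ ∩ Iio x₀).encard < (zeroSet φ ∩ Iio x₀).encard ∨
      (zeroSet φ ∩ Ioi x₀).encard < (zeroSet ψ ∩ Ioi x₀).encard := by
  have hslope : 0 < B * (k' - k) := mul_pos hB (sub_pos.2 hk)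
  have hfin : ∀ {k e φ} (I : Set ℝ), IsEigenfunction (fiberPotential B V k) e φ →
      (zeroSet φ ∩ I).encard ≠ ⊤ := fun I h => encard_ne_top_iff.2
    ((finite_zeroSet_of_isEigenfunction_fiberPotential hB hV hVb h).inter_of_left I)
  rcases le_total ((B * x₀ - k) ^ 2 - e) ((B * x₀ - k') ^ 2 - e') with hle | hle
  · refine .inl ((ENat.add_one_le_iff (hfin _ hψ)).1 ?_)
    exact hψ.encard_zeroSet_inter_add_one_le (isLocallyBounded_fiberPotential hVb)
      (tendsto_fiberPotential_cocompact hB.ne' hV) hφ.isSolution isOpen_Iio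
      (by simpa using hψ₀) (fun x hx => by
        simp only [fiberPotential]
        nlinarith [mul_pos hslope (sub_pos.2 hx)]) nonempty_Iio
  · refine .inr ((ENat.add_one_le_iff (hfin _ hφ)).1 ?_)
    exact hφ.encard_zeroSet_inter_add_one_le (isLocallyBounded_fiberPotential hVb)
      (tendsto_fiberPotential_cocompact hB.ne' hV) hψ.isSolution isOpen_Ioi
      (by simpa using hφ₀) (fun x hx => by
        simp only [fiberPotential]
        nlinarith [mul_pos hslope (sub_pos.2 hx)]) nonempty_Ioi

theorem exists_apply_ne_zero_of_isEigenfunction (hB : 0 < B) (hV : ∀ x, 0 ≤ V x)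
    (hVb : IsLocallyBounded V) {e : ℝ → ℝ} {φ : ℝ → ℝ → ℝ}
    (hφ : ∀ k, IsEigenfunction (fiberPotential B V k) (e k) (φ k)) (x₀ : ℝ) :
    ∃ k, φ k x₀ ≠ 0 := by
  by_contra! hzero
  have hinj : Function.Injective fun k =>
      ((zeroSet (φ k) ∩ Iio x₀).encard, (zeroSet (φ k) ∩ Ioi x₀).encard) :=
    .of_lt_imp_ne fun k k' hk heq => by
      obtain ⟨hleft, hright⟩ := Prod.mk.inj heq
      rcases encard_zeroSet_inter_lt_or_lt hB hV hVb (hφ k) (hφ k') (hzero k) (hzero k') hk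
        with hlt | hlt
      exacts [hlt.ne' hleft, hlt.ne hright]
  exact not_countable hinj.countable

theorem continuous_of_forall_isEigenvalue (hB : 0 < B) (hV : ∀ x, 0 ≤ V x)
    (hVb : IsLocallyBounded V) {e : ℝ → ℝ} (he : ∀ k, IsEigenvalue B V k (e k)) :
    Continuous V := by
  choose φ hφ2 hφ using fun k => (he k).exists_isEigenfunction
  refine continuous_iff_continuousAt.2 fun x₀ => ?_
  obtain ⟨k, hk⟩ := exists_apply_ne_zero_of_isEigenfunction hB hV hVb hφ x₀
  have hQ := (hφ k).isSolution.continuousAt (hφ2 k) hk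
  have hrest : ContinuousAt (fun x => e k - (B * x - k) ^ 2) x₀ := by fun_prop
  refine (hQ.add hrest).congr (.of_forall fun x => ?_)
  simp only [fiberPotential, Pi.add_apply]
  ring

end ContinuityOfPotential

section LandauComparison

variable {B C b D e : ℝ} {V W φ : ℝ → ℝ} {n : ℕ}

theorem IsEigenfunction.le_landauLevel_add (hφ : IsEigenfunction W e φ)
    (hn : (zeroSet φ).encard = n) (hb : 0 < b) (c : ℝ) (hle : ∀ x, W x ≤ (b * x - c) ^ 2 + D) :
    e ≤ (2 * n + 1) * b + D :=
  hφ.energy_le_of_le ((isEigenfunction_landauFunction c hb n).add_const D)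
    (.of_continuous (by fun_prop))
    (tendsto_atTop_add_const_right _ D (tendsto_const_mul_sub_sq_cocompact c hb.ne')) hle hn
    (encard_zeroSet_landauFunction c hb n)

theorem IsEigenfunction.landauLevel_add_le (hφ : IsEigenfunction W e φ)
    (hn : (zeroSet φ).encard = n) (hW : IsLocallyBounded W)
    (htop : Tendsto W (cocompact ℝ) atTop) (hb : 0 < b) (c : ℝ)
    (hle : ∀ x, (b * x - c) ^ 2 + D ≤ W x) : (2 * n + 1) * b + D ≤ e :=
  ((isEigenfunction_landauFunction c hb n).add_const D).energy_le_of_le hφ hW htop hle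
    (encard_zeroSet_landauFunction c hb n) hn

theorem eventually_forall_le_fiberPotential (hV : ∀ x, 0 ≤ V x)
    (hVlim : Tendsto V (cocompact ℝ) (𝓝 C)) {θ ε : ℝ} (hθ : θ ∈ Ioo 0 1) (hε : 0 < ε) :
    ∀ᶠ k in cocompact ℝ, ∀ x, (θ * B * x - θ * k) ^ 2 + (C - ε) ≤ fiberPotential B V k x := by
  obtain ⟨R, hR, hR'⟩ := exists_forall_Ici_of_eventually_cocompact
    (hVlim.eventually_const_lt (sub_lt_self C hε))
  have hgap : 0 < 1 - θ ^ 2 := by nlinarith [hθ.1, hθ.2]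
  filter_upwards [tendsto_norm_cocompact_atTop.eventually_ge_atTop
    (|B| * R + √(|C| / (1 - θ ^ 2)))] with k hk x
  rw [Real.norm_eq_abs] at hk
  suffices hdefect : C - ε ≤ (1 - θ ^ 2) * (B * x - k) ^ 2 + V x by
    rw [fiberPotential]
    linarith
  have hnonneg : 0 ≤ (1 - θ ^ 2) * (B * x - k) ^ 2 := by positivity
  rcases le_or_gt R |x| with hx | hx
  · have hVx : C - ε < V x := by
      rcases abs_choice x with habs | habs
      · exact hR x (habs ▸ hx)
      · simpa using hR' (-x) (habs ▸ hx)
    linarith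
  · have hdist : √(|C| / (1 - θ ^ 2)) ≤ |B * x - k| := by
      have hBx : |B * x| ≤ |B| * R := by rw [abs_mul]; gcongr
      have htriangle := abs_sub_abs_le_abs_sub k (B * x)
      rw [abs_sub_comm] at htriangle
      linarith
    have hwell : |C| / (1 - θ ^ 2) ≤ (B * x - k) ^ 2 := by
      simpa only [sq_abs] using (Real.sqrt_le_left (abs_nonneg _)).1 hdist
    rw [div_le_iff₀' hgap] at hwell
    linarith [le_abs_self C, hV x]

theorem eventually_lt_of_lt_landauLevel_add (hB : 0 < B) (hV : ∀ x, 0 ≤ V x)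
    (hVb : IsLocallyBounded V) (hVlim : Tendsto V (cocompact ℝ) (𝓝 C)) {e : ℝ → ℝ}
    {φ : ℝ → ℝ → ℝ} (hφ : ∀ k, IsEigenfunction (fiberPotential B V k) (e k) (φ k))
    (hn : ∀ k, (zeroSet (φ k)).encard = n) {a : ℝ} (ha : a < (2 * n + 1) * B + C) :
    ∀ᶠ k in cocompact ℝ, a < e k := by
  have hlim : Tendsto (fun θ : ℝ => (2 * n + 1) * (θ * B) + (C - (1 - θ))) (𝓝[<] 1)
      (𝓝 ((2 * n + 1) * B + C)) := tendsto_nhdsWithin_of_tendsto_nhds <| by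
    have hcont : Continuous fun θ : ℝ => (2 * n + 1) * (θ * B) + (C - (1 - θ)) := by fun_prop
    simpa using hcont.tendsto 1
  obtain ⟨θ, haθ, hθ⟩ := ((hlim.eventually_const_lt ha).and (Ioo_mem_nhdsLT one_pos)).exists
  filter_upwards [eventually_forall_le_fiberPotential hV hVlim hθ (sub_pos.2 hθ.2)] with k hk
  exact haθ.trans_le <| (hφ k).landauLevel_add_le (hn k) (isLocallyBounded_fiberPotential hVb)
    (tendsto_fiberPotential_cocompact hB.ne' hV) (mul_pos hθ.1 hB) (θ * k) hk

end LandauComparison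

theorem exists_isEigenfunction_encard_zeroSet_eq_index {B k : ℝ} {V : ℝ → ℝ} (hB : B ≠ 0)
    (hV : ∀ x, 0 ≤ V x) (hVc : Continuous V) {ω : ℕ → ℝ} (hω : StrictMono ω)
    (heig : ∀ j, IsEigenvalue B V k (ω j)) (hexh : ∀ e, IsEigenvalue B V k e → ∃ j, e = ω j)
    (j : ℕ) :
    ∃ φ, IsEigenfunction (fiberPotential B V k) (ω j) φ ∧ (zeroSet φ).encard = j := by
  choose φ _ hφ using fun j => (heig j).exists_isEigenfunction
  have hW : Continuous (fiberPotential B V k) := by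
    unfold fiberPotential
    fun_prop
  exact ⟨φ j, hφ j, encard_zeroSet_eq_of_strictMono hW (tendsto_fiberPotential_cocompact hB hV) hω
    hφ (fun e ψ hψ => hexh e (hψ.isEigenvalue hVc)) j⟩

/-- If `0 ≤ V₀ ≤ C` with `V₀(x) → C` as `|x| → ∞` and `0 < C < ∞`, then the `j`-th
dispersion curve of `h₀(k)` satisfies `ω_j(k) → (2j+1)B + C` as `|k| → ∞`. -/
theorem dispersion_curve_limit_bounded (B C : ℝ) (hB : 0 < B) (hC : 0 < C)
    (V₀ : ℝ → ℝ)
    (hVbdd : ∀ x, 0 ≤ V₀ x ∧ V₀ x ≤ C)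
    (hVlim : Tendsto V₀ (cocompact ℝ) (nhds C))
    (ω : ℕ → ℝ → ℝ)
    (hmono : ∀ k, StrictMono (fun j => ω j k))
    (heig : ∀ j k, IsEigenvalue B V₀ k (ω j k))
    (hexh : ∀ k e, IsEigenvalue B V₀ k e → ∃ j, e = ω j k)
    (j : ℕ) :
    Tendsto (fun k => ω j k) (cocompact ℝ) (nhds ((2 * (j : ℝ) + 1) * B + C)) := by
  have hV : ∀ x, 0 ≤ V₀ x := fun x => (hVbdd x).1
  have hVb : IsLocallyBounded V₀ := fun _ _ =>
    ⟨C, fun x _ => abs_le.2 ⟨by linarith [hV x], (hVbdd x).2⟩⟩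
  have hVc : Continuous V₀ := continuous_of_forall_isEigenvalue hB hV hVb (heig j)
  choose φ hφ hφj using fun k => exists_isEigenfunction_encard_zeroSet_eq_index hB.ne' hV hVc
    (hmono k) (fun i => heig i k) (hexh k) j
  have hupper : ∀ k, ω j k ≤ (2 * (j : ℝ) + 1) * B + C := fun k =>
    (hφ k).le_landauLevel_add (hφj k) hB k fun x => add_le_add_right (hVbdd x).2 _
  exact tendsto_order.2 ⟨fun a ha => eventually_lt_of_lt_landauLevel_add hB hV hVb hVlim hφ hφj ha,
    fun a ha => .of_forall fun k => (hupper k).trans_lt ha⟩
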